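/- arXiv:1511.01215 — 2 statements merged into one kernel-verified Lean document; each statement's English description precedes it below -/
import Mathlib

section
/- Alexandrov–Bakelman–Pucci–Krylov–Tso estimate with critical drift: Let Ω ⊂ ℝⁿ be a bounded domain of diameter at most r > 0, T > 0, and Q_Ω = Ω × (0,T). Let u ∈ C^{2,1}(Q_Ω) ∩ C(closure of Q_Ω) satisfy −u_t + Σ_{i,j} a_{ij} D_{ij}u + Σ_i b_i D_i u ≥ f at every point of Q_Ω, where f is measurable with ‖f‖_{L^n_x L^∞_t(Q_Ω)} := (∫_Ω (ess sup_{t∈(0,T)} |f(x,t)|)ⁿ dx)^{1/n} < ∞, and suppose u ≤ 0 on the parabolic boundary ∂_p Q_Ω = (∂Ω × (0,T)) ∪ (Ω × {0}). Then sup_{Q_Ω} u ≤ N · r · ‖f‖_{L^n_x L^∞_t(Q_Ω)}, where N is a positive constant depending only on n, ν and S. -/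
open MeasureTheory ENNReal Metric Set RealInnerProductSpace

noncomputable section

/-- `n`-dimensional Euclidean space. -/
abbrev En (n : ℕ) : Type := EuclideanSpace ℝ (Fin n)

variable {n : ℕ}

/-- Time derivative `u_t`. -/
def Dt (u : En n × ℝ → ℝ) (X : En n × ℝ) : ℝ :=
  deriv (fun t => u (X.1, t)) X.2

/-- First spatial derivative `D_i u`. -/
def Dx (u : En n × ℝ → ℝ) (i : Fin n) (X : En n × ℝ) : ℝ :=
  fderiv ℝ (fun x => u (x, X.2)) X.1 (EuclideanSpace.single i 1)

/-- Second spatial derivative `D_{ij} u`. -/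
def Dxx (u : En n × ℝ → ℝ) (i j : Fin n) (X : En n × ℝ) : ℝ :=
  Dx (Dx u j) i X

/-- `u` is of class `C^{2,1}` on `Q`: `u`, `D_i u`, `D_{ij} u`, `u_t` exist and are
continuous on `Q`. -/
structure IsC21 (u : En n × ℝ → ℝ) (Q : Set (En n × ℝ)) : Prop where
  cont : ContinuousOn u Q
  diff_t : ∀ X ∈ Q, DifferentiableAt ℝ (fun t => u (X.1, t)) X.2
  diff_x : ∀ X ∈ Q, DifferentiableAt ℝ (fun x => u (x, X.2)) X.1
  diff_xx : ∀ j : Fin n, ∀ X ∈ Q, DifferentiableAt ℝ (fun x => Dx u j (x, X.2)) X.1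
  cont_t : ContinuousOn (Dt u) Q
  cont_x : ∀ i, ContinuousOn (Dx u i) Q
  cont_xx : ∀ i j, ContinuousOn (Dxx u i j) Q

/-- Uniform parabolicity with constant `ν` on `Q`:
`ν⁻¹|ξ|² ≤ Σ a_ij ξ_i ξ_j` and `Σ a_ij² ≤ ν²`. -/
def UnifParabolic (ν : ℝ) (a : En n × ℝ → Matrix (Fin n) (Fin n) ℝ)
    (Q : Set (En n × ℝ)) : Prop :=
  ∀ X ∈ Q, (∀ ξ : Fin n → ℝ, ν⁻¹ * (∑ i, ξ i ^ 2) ≤ ∑ i, ∑ j, a X i j * ξ i * ξ j) ∧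
    (∑ i, ∑ j, (a X i j) ^ 2) ≤ ν ^ 2

/-- `Lu = Σ_{ij} a_ij D_ij u + Σ_i b_i D_i u`. -/
def Lop (a : En n × ℝ → Matrix (Fin n) (Fin n) ℝ) (b : En n × ℝ → En n)
    (u : En n × ℝ → ℝ) (X : En n × ℝ) : ℝ :=
  (∑ i, ∑ j, a X i j * Dxx u i j X) + ∑ i, b X i * Dx u i X

/-- `∫ (ess sup_t |f(x,t)|)ⁿ dx`, the `n`-th power of the `L^n_x L^∞_t` norm of `f`
over the set `Q ⊆ ℝⁿ × ℝ`. -/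
def LxnLtinfPow {E : Type*} [NNNorm E] (f : En n × ℝ → E) (Q : Set (En n × ℝ)) : ℝ≥0∞ :=
  ∫⁻ x, (essSup (fun t => (‖f (x, t)‖₊ : ℝ≥0∞)) (volume.restrict {t | (x, t) ∈ Q})) ^ n

/-- The `L^n_x L^∞_t` norm of `f` over `Q`. -/
def LxnLtinf {E : Type*} [NNNorm E] (f : En n × ℝ → E) (Q : Set (En n × ℝ)) : ℝ≥0∞ :=
  (LxnLtinfPow f Q) ^ (1 / (n : ℝ))

/-- The box `B_ρ(y) × (t₁, t₂)`. -/
def box (y : En n) (ρ t₁ t₂ : ℝ) : Set (En n × ℝ) := ball y ρ ×ˢ Ioo t₁ t₂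

/-- The standard parabolic cylinder `Q_r(Y) = B_r(y) × (s - r², s)`. -/
def pcyl (Y : En n × ℝ) (r : ℝ) : Set (En n × ℝ) := box Y.1 r (Y.2 - r ^ 2) Y.2

/-- The slanted cylinder `V_r(Y) = {(x,t) : |x - (t/s)y| < r, 0 < t < s}`. -/
def slantCyl (Y : En n × ℝ) (r : ℝ) : Set (En n × ℝ) :=
  {X | ‖X.1 - (X.2 / Y.2) • Y.1‖ < r ∧ 0 < X.2 ∧ X.2 < Y.2}

/-- Supremum of the positive part `u₊` over a set `A`. -/
def supPos (u : En n × ℝ → ℝ) (A : Set (En n × ℝ)) : ℝ :=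
  sSup ((fun X => max (u X) 0) '' A)

/-- `Ω` is a Lipschitz domain with character `(rΩ, mΩ)`: at every boundary point `y`
there is a coordinate frame, encoded by the unit "vertical" direction `e`, in which
`Ω ∩ B_{rΩ}(y)` is the region above the graph of an `mΩ`-Lipschitz function `φ`
of the tangential variables. -/
def IsLipschitzDomain (Ω : Set (En n)) (rΩ mΩ : ℝ) : Prop :=
  0 < rΩ ∧ 0 ≤ mΩ ∧
  ∀ y ∈ frontier Ω, ∃ (e : En n) (φ : En n → ℝ),
    ‖e‖ = 1 ∧ LipschitzWith (Real.toNNReal mΩ) φ ∧ φ 0 = 0 ∧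
    (∀ x, x ∈ Ω ∩ ball y rΩ ↔
      dist x y < rΩ ∧ φ ((x - y) - ⟪x - y, e⟫ • e) < ⟪x - y, e⟫) ∧
    (∀ ρ : ℝ, 0 < ρ → ρ ≤ rΩ → y + ρ • e ∈ Ω)

namespace ABP

lemma det_bound {n : ℕ} {ν : ℝ} (hν : 0 < ν) (a H : Matrix (Fin n) (Fin n) ℝ)
    (ha : ∀ ξ : Fin n → ℝ, ν⁻¹ * (∑ i, ξ i ^ 2) ≤ ∑ i, ∑ j, a i j * ξ i * ξ j)
    (hH : H.PosSemidef) :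
    |H.det| ≤ (ν * ∑ i, ∑ j, a i j * H i j) ^ n ∧ 0 ≤ ν * ∑ i, ∑ j, a i j * H i j := by
  have htr : H.trace ≤ ν * ∑ i, ∑ j, a i j * H i j := by
    obtain ⟨B, hB⟩ : ∃ B : Matrix (Fin n) (Fin n) ℝ, H = B.conjTranspose * B := by
      open scoped MatrixOrder in
      obtain ⟨B, hB⟩ := CStarAlgebra.nonneg_iff_eq_star_mul_self.mp hH.nonneg
      exact ⟨B, hB⟩
    have hij : ∀ i j, H i j = ∑ k, B k i * B k j := by
      intro i j; rw [hB]; simp [Matrix.mul_apply]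
    have h1 : ∑ i, ∑ j, a i j * H i j = ∑ k, ∑ i, ∑ j, a i j * B k i * B k j := by
      simp_rw [hij, Finset.mul_sum]
      rw [Finset.sum_comm (s := (Finset.univ : Finset (Fin n))) (t := Finset.univ)
        (f := fun k i => ∑ j, a i j * B k i * B k j)]
      refine Finset.sum_congr rfl fun i _ => ?_
      rw [Finset.sum_comm (s := (Finset.univ : Finset (Fin n))) (t := Finset.univ)
        (f := fun k j => a i j * B k i * B k j)]
      simp_rw [mul_assoc]
    have h2 : H.trace = ∑ k, ∑ i, B k i ^ 2 := by
      rw [Finset.sum_comm]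
      simp [Matrix.trace, hij, sq]
    have h3 : ν⁻¹ * H.trace ≤ ∑ i, ∑ j, a i j * H i j := by
      rw [h1, h2, Finset.mul_sum]
      exact Finset.sum_le_sum fun k _ => ha (B k)
    calc H.trace = ν * (ν⁻¹ * H.trace) := by field_simp
      _ ≤ _ := by gcongr
  have hev : ∀ i, 0 ≤ hH.1.eigenvalues i := hH.eigenvalues_nonneg
  have htr' : H.trace = ∑ i, hH.1.eigenvalues i := by
    simpa using hH.1.trace_eq_sum_eigenvalues
  have hdet : H.det = ∏ i, hH.1.eigenvalues i := by
    simpa using hH.1.det_eq_prod_eigenvalues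
  have h0 : 0 ≤ H.trace := by rw [htr']; exact Finset.sum_nonneg fun i _ => hev i
  refine ⟨?_, h0.trans htr⟩
  rw [abs_of_nonneg (by rw [hdet]; exact Finset.prod_nonneg fun i _ => hev i)]
  calc H.det = ∏ i, hH.1.eigenvalues i := hdet
    _ ≤ ∏ i : Fin n, H.trace := by
        refine Finset.prod_le_prod (fun i _ => hev i) fun i _ => ?_
        rw [htr']
        exact Finset.single_le_sum (fun i _ => hev i) (Finset.mem_univ i)
    _ = H.trace ^ n := by simp
    _ ≤ _ := by gcongr

lemma area_le {n : ℕ} {A : Set (En n)} (hA : MeasurableSet A) {Φ : En n → En n}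
    {Φ' : En n → En n →L[ℝ] En n} (hΦ : ∀ x ∈ A, HasFDerivWithinAt Φ (Φ' x) A x)
    {w : En n → ℝ≥0∞} (hw : Measurable w) (hwA : ∀ p, w p ≠ 0 → p ∈ Φ '' A) :
    ∫⁻ p, w p ≤ ∫⁻ x in A, ENNReal.ofReal |(Φ' x).det| * w (Φ x) := by
  have hcont : ContinuousOn Φ A := fun x hx => (hΦ x hx).continuousWithinAt
  have hd : AEMeasurable (fun x => ENNReal.ofReal |(Φ' x).det|) (volume.restrict A) :=
    aemeasurable_ofReal_abs_det_fderivWithin volume hA hΦ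
  set ρ := (volume.restrict A).withDensity (fun x => ENNReal.ofReal |(Φ' x).det|) with hρ
  have hΦm : AEMeasurable Φ (volume.restrict A) := hcont.aemeasurable hA
  have hΦm' : AEMeasurable Φ ρ := hΦm.mono_ac (withDensity_absolutelyContinuous _ _)
  have hle : (volume : Measure (En n)).restrict (Φ '' A) ≤ ρ.map Φ := by
    refine Measure.le_iff.2 fun B hB => ?_
    rw [Measure.restrict_apply hB, Measure.map_apply_of_aemeasurable hΦm' hB]
    have hm : MeasurableSet (A ∩ Φ ⁻¹' B) := by
      classical
      have h1 : Measurable (A.piecewise Φ (fun _ => 0)) :=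
        hcont.measurable_piecewise continuousOn_const hA
      have h2 : A ∩ Φ ⁻¹' B = A ∩ (A.piecewise Φ (fun _ => 0)) ⁻¹' B := by
        ext x
        simp only [mem_inter_iff, mem_preimage]
        refine and_congr_right fun hx => ?_
        rw [piecewise_eq_of_mem _ _ _ hx]
      rw [h2]
      exact hA.inter (h1 hB)
    calc volume (B ∩ Φ '' A) = volume (Φ '' (A ∩ Φ ⁻¹' B)) := by
          congr 1; ext p; constructor
          · rintro ⟨h1, x, hx, rfl⟩; exact ⟨x, ⟨hx, h1⟩, rfl⟩
          · rintro ⟨x, ⟨hx, h1⟩, rfl⟩; exact ⟨h1, x, hx, rfl⟩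
      _ ≤ ∫⁻ x in A ∩ Φ ⁻¹' B, ENNReal.ofReal |(Φ' x).det| :=
          addHaar_image_le_lintegral_abs_det_fderiv volume hm
            fun x hx => (hΦ x hx.1).mono inter_subset_left
      _ = ρ (A ∩ Φ ⁻¹' B) := by
          rw [hρ, withDensity_apply _ hm, Measure.restrict_restrict hm]
          congr 2; rw [inter_right_comm, inter_self]
      _ ≤ ρ (Φ ⁻¹' B) := measure_mono inter_subset_right
  calc ∫⁻ p, w p = ∫⁻ p in {p | w p ≠ 0}, w p := by
        have hms : MeasurableSet {p | w p ≠ 0} := hw (measurableSet_singleton 0).compl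
        rw [← lintegral_indicator hms]
        congr 1; ext p
        by_cases h : w p = 0 <;> simp [indicator, h]
    _ ≤ ∫⁻ p in Φ '' A, w p := lintegral_mono_set hwA
    _ ≤ ∫⁻ p, w p ∂(ρ.map Φ) := lintegral_mono' hle le_rfl
    _ = ∫⁻ x, w (Φ x) ∂ρ := lintegral_map' hw.aemeasurable hΦm'
    _ = _ := by
        rw [hρ, lintegral_withDensity_eq_lintegral_mul_non_measurable₀ _ hd (by simp)]
        rfl

/-- Lower bound for the weight integral. -/
lemma weight_lower {n : ℕ} (hn : 0 < n) {μ : ℝ} (hμ : 0 < μ) (m : ℕ) :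
    (m : ℝ≥0∞) * (ENNReal.ofReal ((4 : ℝ)⁻¹ ^ n) * volume (ball (0 : En n) 1)) ≤
      ∫⁻ p in ball (0 : En n) (μ * 2 ^ m), ENNReal.ofReal (((μ + ‖p‖) ^ n)⁻¹) := by
  have : Nonempty (Fin n) := ⟨⟨0, hn⟩⟩
  have hfin : volume (ball (0 : En n) 1) ≠ ⊤ := measure_ball_lt_top.ne
  have hb : ∀ R : ℝ, 0 ≤ R → volume (ball (0 : En n) R) =
      ENNReal.ofReal (R ^ n) * volume (ball (0 : En n) 1) := by
    intro R hR
    have := Measure.addHaar_ball (volume : Measure (En n)) 0 hR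
    simpa using this
  induction m with
  | zero => simp
  | succ m ih =>
    set R := μ * 2 ^ m with hR
    have hR0 : 0 < R := by positivity
    have hR1 : μ * 2 ^ (m + 1) = 2 * R := by rw [hR]; ring
    rw [hR1]
    have hμR : μ ≤ R := by
      rw [hR]; exact le_mul_of_one_le_right hμ.le (one_le_pow₀ (by norm_num))
    have hsub : ball (0 : En n) R ⊆ ball 0 (2 * R) := ball_subset_ball (by linarith)
    have hsplit : ball (0 : En n) (2 * R) = ball 0 R ∪ (ball 0 (2 * R) \ ball 0 R) :=
      (union_sdiff_cancel hsub).symm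
    rw [hsplit, lintegral_union (measurableSet_ball.diff measurableSet_ball) disjoint_sdiff_right]
    push_cast
    rw [add_mul, one_mul]
    refine add_le_add ih ?_
    have hvol : ENNReal.ofReal (R ^ n) * volume (ball (0 : En n) 1) ≤
        volume (ball (0 : En n) (2 * R) \ ball 0 R) := by
      rw [measure_sdiff hsub measurableSet_ball.nullMeasurableSet measure_ball_lt_top.ne,
        hb R hR0.le, hb (2 * R) (by positivity)]
      refine ENNReal.le_sub_of_add_le_left (by finiteness) ?_
      rw [← add_mul, ← ENNReal.ofReal_add (by positivity) (by positivity)]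
      refine mul_le_mul_left (ENNReal.ofReal_le_ofReal ?_) _
      have h2 : (2 : ℝ) ≤ 2 ^ n := le_self_pow₀ (by norm_num) hn.ne'
      rw [mul_pow 2 R n]
      nlinarith [pow_pos hR0 n]
    calc ENNReal.ofReal ((4 : ℝ)⁻¹ ^ n) * volume (ball (0 : En n) 1)
        = ENNReal.ofReal (((4 * R) ^ n)⁻¹) * (ENNReal.ofReal (R ^ n) * volume (ball (0 : En n) 1)) := by
          rw [← mul_assoc, ← ENNReal.ofReal_mul (by positivity)]
          congr 2
          rw [mul_pow, inv_pow, mul_inv, mul_assoc, inv_mul_cancel₀ (by positivity), mul_one]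
      _ ≤ ENNReal.ofReal (((4 * R) ^ n)⁻¹) * volume (ball (0 : En n) (2 * R) \ ball 0 R) := by
          gcongr
      _ = ∫⁻ p in ball (0 : En n) (2 * R) \ ball 0 R, ENNReal.ofReal (((4 * R) ^ n)⁻¹) := by
          rw [setLIntegral_const]
      _ ≤ _ := by
          refine setLIntegral_mono' (measurableSet_ball.diff measurableSet_ball) fun p hp => ?_
          have : ‖p‖ < 2 * R := by simpa using hp.1
          gcongr
          linarith

end ABP
namespace ABP
open Filter Topology

/-- Spatial gradient. -/
def grad {n : ℕ} (u : En n × ℝ → ℝ) (X : En n × ℝ) : En n := WithLp.toLp 2 (fun i => Dx u i X)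

/-- Spatial Hessian. -/
def hess {n : ℕ} (u : En n × ℝ → ℝ) (X : En n × ℝ) : Matrix (Fin n) (Fin n) ℝ :=
  Matrix.of fun i j => Dxx u i j X

/-- The Hessian as an operator. -/
def hop {n : ℕ} (u : En n × ℝ → ℝ) (X : En n × ℝ) : En n →L[ℝ] En n :=
  LinearMap.toContinuousLinearMap (Matrix.toLin (EuclideanSpace.basisFun (Fin n) ℝ).toBasis
    (EuclideanSpace.basisFun (Fin n) ℝ).toBasis (hess u X).transpose)

lemma hop_det {n : ℕ} (u : En n × ℝ → ℝ) (X : En n × ℝ) : (hop u X).det = (hess u X).det := by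
  simp [hop, ContinuousLinearMap.det, LinearMap.det_toLin]

lemma hop_apply {n : ℕ} (u : En n × ℝ → ℝ) (X : En n × ℝ) (ξ : En n) (j : Fin n) :
    hop u X ξ j = ∑ i, Dxx u i j X * ξ i := by
  simp [hop, Matrix.toLin_apply, Matrix.mulVec, dotProduct, hess, EuclideanSpace.basisFun_apply, Pi.single_apply]

lemma clm_eq_sum {n : ℕ} (ℓ : En n →L[ℝ] ℝ) (ξ : En n) :
    ℓ ξ = ∑ i, ξ i * ℓ (EuclideanSpace.single i 1) := by
  have h : ξ = ∑ i, ξ i • (EuclideanSpace.single i (1 : ℝ) : En n) := by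
    have := (EuclideanSpace.basisFun (Fin n) ℝ).sum_repr ξ
    simpa using this.symm
  conv_lhs => rw [h]
  simp

lemma hasFDerivAt_u {n : ℕ} {u : En n × ℝ → ℝ} {Q : Set (En n × ℝ)} (hu : IsC21 u Q)
    {X : En n × ℝ} (hX : X ∈ Q) :
    HasFDerivAt (fun x => u (x, X.2)) (innerSL ℝ (grad u X)) X.1 := by
  have h := (hu.diff_x X hX).hasFDerivAt
  have he : innerSL ℝ (grad u X) = fderiv ℝ (fun x => u (x, X.2)) X.1 := by
    refine ContinuousLinearMap.ext fun ξ => ?_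
    rw [clm_eq_sum (fderiv ℝ (fun x => u (x, X.2)) X.1) ξ]
    simp [grad, Dx, PiLp.inner_apply]
  rw [he]
  exact h

lemma hasFDerivAt_grad {n : ℕ} {u : En n × ℝ → ℝ} {Q : Set (En n × ℝ)} (hu : IsC21 u Q)
    {X : En n × ℝ} (hX : X ∈ Q) :
    HasFDerivAt (fun x => grad u (x, X.2)) (hop u X) X.1 := by
  rw [← hasFDerivWithinAt_univ, hasFDerivWithinAt_euclidean]
  intro j
  have h := (hu.diff_xx j X hX).hasFDerivAt
  have he : (EuclideanSpace.proj j : En n →L[ℝ] ℝ).comp (hop u X) =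
      fderiv ℝ (fun x => Dx u j (x, X.2)) X.1 := by
    refine ContinuousLinearMap.ext fun ξ => ?_
    rw [clm_eq_sum (fderiv ℝ (fun x => Dx u j (x, X.2)) X.1) ξ]
    have hp : (EuclideanSpace.proj j : En n →L[ℝ] ℝ).comp (hop u X) ξ = hop u X ξ j := rfl
    rw [hp, hop_apply]
    exact Finset.sum_congr rfl fun i _ => mul_comm _ _
  rw [← he, ← hasFDerivWithinAt_univ] at h
  exact h

lemma slice_mem {n : ℕ} {Q : Set (En n × ℝ)} (hQ : IsOpen Q) {X : En n × ℝ} (hX : X ∈ Q) :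
    ∀ᶠ x in 𝓝 X.1, (x, X.2) ∈ Q := by
  have hc : ContinuousAt (fun x : En n => (x, X.2)) X.1 := by fun_prop
  exact hc.eventually (hQ.mem_nhds hX)

lemma hess_symm {n : ℕ} {u : En n × ℝ → ℝ} {Q : Set (En n × ℝ)} (hQ : IsOpen Q) (hu : IsC21 u Q)
    {X : En n × ℝ} (hX : X ∈ Q) (i j : Fin n) : Dxx u i j X = Dxx u j i X := by
  have h1 : ∀ᶠ y in 𝓝 X.1, HasFDerivAt (fun x => u (x, X.2)) (innerSL ℝ (grad u (y, X.2))) y := by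
    filter_upwards [slice_mem hQ hX] with y hy using hasFDerivAt_u hu hy
  have h2 : HasFDerivAt (fun y => innerSL ℝ (grad u (y, X.2)))
      ((innerSL ℝ : En n →L[ℝ] En n →L[ℝ] ℝ).comp (hop u X)) X.1 :=
    (innerSL ℝ : En n →L[ℝ] En n →L[ℝ] ℝ).hasFDerivAt.comp X.1 (hasFDerivAt_grad hu hX)
  have := second_derivative_symmetric_of_eventually h1 h2 (EuclideanSpace.single i 1)
    (EuclideanSpace.single j 1)
  simpa [EuclideanSpace.inner_single_right, hop_apply, Pi.single_apply] using this

lemma contact_grad_hess {n : ℕ} {u : En n × ℝ → ℝ} {Q : Set (En n × ℝ)} (hQ : IsOpen Q)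
    (hu : IsC21 u Q) {X : En n × ℝ} (hX : X ∈ Q) {p x0 : En n}
    (hmax : IsLocalMax (fun x => u (x, X.2) - (inner ℝ (p) (x - x0) : ℝ)) X.1) :
    grad u X = p ∧ (-hess u X).PosSemidef := by
  have hd : ∀ y, (y, X.2) ∈ Q → HasFDerivAt (fun x => u (x, X.2) - (inner ℝ (p) (x - x0) : ℝ))
      (innerSL ℝ (grad u (y, X.2) - p)) y := by
    intro y hy
    rw [map_sub]
    refine (hasFDerivAt_u hu hy).sub ?_
    exact ((innerSL ℝ p).hasFDerivAt (x := y - x0)).comp y ((hasFDerivAt_id y).sub_const x0)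
  have hgrad : grad u X = p := by
    have h0 := hmax.hasFDerivAt_eq_zero (hd X.1 hX)
    have h1 : (inner ℝ (grad u X - p) (grad u X - p) : ℝ) = 0 := by
      exact DFunLike.congr_fun h0 (grad u X - p)
    exact sub_eq_zero.1 (inner_self_eq_zero.1 h1)
  refine ⟨hgrad, ?_⟩
  refine Matrix.PosSemidef.of_dotProduct_mulVec_nonneg ?_ ?_
  · ext i j
    simp [hess, hess_symm hQ hu hX i j]
  intro ξ'
  set ξ : En n := WithLp.toLp 2 ξ' with hξ
  have hform : star ξ' ⬝ᵥ ((-hess u X).mulVec ξ') = - (inner ℝ (hop u X ξ) (ξ) : ℝ) := by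
    simp only [PiLp.inner_apply, hop_apply, dotProduct, Matrix.mulVec, Matrix.neg_apply, hess,
      Matrix.of_apply, Pi.star_apply, star_trivial, RCLike.inner_apply, conj_trivial]
    rw [← Finset.sum_neg_distrib]
    refine Finset.sum_congr rfl fun i _ => ?_
    rw [Finset.mul_sum, Finset.mul_sum, ← Finset.sum_neg_distrib]
    refine Finset.sum_congr rfl fun j _ => ?_
    rw [hess_symm hQ hu hX i j]
    simp only [hξ]
    ring
  rw [hform]
  by_contra hneg
  push Not at hneg
  have hpos : 0 < (inner ℝ (hop u X ξ) (ξ) : ℝ) := by linarith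
  set c : ℝ → En n := fun s => X.1 + s • ξ with hc
  have hc0 : c 0 = X.1 := by simp [hc]
  have hcd : ∀ s, HasDerivAt c ξ s := by
    intro s
    have := ((hasDerivAt_id s).smul_const ξ).const_add X.1
    simpa [hc] using this
  have hcc : ContinuousAt c 0 := (hcd 0).continuousAt
  set φ : ℝ → ℝ := fun s => u (c s, X.2) - (inner ℝ (p) (c s - x0) : ℝ) with hφ
  have hev : ∀ᶠ s in 𝓝 (0:ℝ), (c s, X.2) ∈ Q := by
    have := slice_mem hQ hX
    rw [← hc0] at this
    exact hcc.eventually this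
  have hφd : ∀ s, (c s, X.2) ∈ Q → HasDerivAt φ ((inner ℝ (grad u (c s, X.2) - p) ξ : ℝ)) s := by
    intro s hs
    exact (hd (c s) hs).comp_hasDerivAt s (hcd s)
  have hderiv : deriv φ =ᶠ[𝓝 0] fun s => (inner ℝ (grad u (c s, X.2) - p) ξ : ℝ) := by
    filter_upwards [hev] with s hs using (hφd s hs).deriv
  have hdd : deriv (deriv φ) 0 = (inner ℝ (hop u X ξ) (ξ) : ℝ) := by
    rw [hderiv.deriv_eq]
    have hg : HasFDerivAt (fun x => grad u (x, X.2)) (hop u X) (c 0) := by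
      rw [hc0]; exact hasFDerivAt_grad hu hX
    have h1 : HasDerivAt (fun s => grad u (c s, X.2)) (hop u X ξ) 0 :=
      hg.comp_hasDerivAt 0 (hcd 0)
    have h2 := (h1.sub_const p).inner ℝ (hasDerivAt_const (0:ℝ) ξ)
    simpa using h2.deriv
  have hd0 : deriv φ 0 = 0 := by
    rw [hderiv.eq_of_nhds, hc0]
    have : grad u (X.1, X.2) = p := hgrad
    simp [this]
  have hX0 : (c 0, X.2) ∈ Q := by rw [hc0]; exact hX
  have hmin : IsLocalMin φ 0 :=
    isLocalMin_of_deriv_deriv_pos (by rw [hdd]; exact hpos) hd0 (hφd 0 hX0).continuousAt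
  have hmax' : IsLocalMax φ 0 := by
    have h1 : IsLocalMax (fun x => u (x, X.2) - (inner ℝ (p) (x - x0) : ℝ)) (c 0) := by rw [hc0]; exact hmax
    exact h1.comp_continuous (g := c) hcc
  have hconst : φ =ᶠ[𝓝 0] fun _ => φ 0 := by
    filter_upwards [hmin, hmax'] with s h1 h2 using le_antisymm h2 h1
  have : deriv (deriv φ) 0 = 0 := by
    rw [(hconst.deriv).deriv_eq]
    simp
  rw [hdd] at this
  linarith

end ABP
namespace ABP
open Filter Topology

lemma deriv_nonneg_of_left {k : ℝ → ℝ} {d t : ℝ} (hk : HasDerivAt k d t)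
    (h : ∀ᶠ s in 𝓝[<] t, k s ≤ k t) : 0 ≤ d := by
  have h1 : Tendsto (slope k t) (𝓝[<] t) (𝓝 d) :=
    (hasDerivAt_iff_tendsto_slope.1 hk).mono_left
      (nhdsWithin_mono _ fun s hs => ne_of_lt hs)
  refine ge_of_tendsto h1 ?_
  filter_upwards [h, self_mem_nhdsWithin] with s hs hst
  rw [slope_def_field]
  have : s < t := hst
  exact div_nonneg_of_nonpos (by linarith) (by linarith)

/-- The tilted function. -/
def W {n : ℕ} (v : En n × ℝ → ℝ) (x0 p : En n) (z : En n × ℝ) : ℝ := v z - inner ℝ p (z.1 - x0)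

/-- The truncated running maximum of the tilted function. -/
def MM {n : ℕ} (v : En n × ℝ → ℝ) (x0 : En n) (K : Set (En n)) (T1 m0 : ℝ) (p : En n) (t : ℝ) : ℝ :=
  max m0 (sSup ((fun z : En n × ℝ => W v x0 p (z.1, min z.2 t)) '' (K ×ˢ Icc 0 T1)))

section MMlemmas

variable {n : ℕ} {v : En n × ℝ → ℝ} {x0 : En n} {K : Set (En n)} {T1 m0 : ℝ}

lemma W_cont (hv : Continuous v) : Continuous fun q : En n × (En n × ℝ) => W v x0 q.1 q.2 := by
  unfold W
  fun_prop

lemma MM_cont (hv : Continuous v) (hK : IsCompact K) :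
    Continuous (Function.uncurry (MM v x0 K T1 m0)) := by
  have h : Continuous fun q : En n × ℝ =>
      sSup ((fun z : En n × ℝ => W v x0 q.1 (z.1, min z.2 q.2)) '' (K ×ˢ Icc 0 T1)) := by
    refine IsCompact.continuous_sSup (f := fun (q : En n × ℝ) (z : En n × ℝ) =>
      W v x0 q.1 (z.1, min z.2 q.2)) (hK.prod isCompact_Icc) ?_
    have : Continuous fun a : (En n × ℝ) × (En n × ℝ) =>
        ((a.1.1, (a.2.1, min a.2.2 a.1.2)) : En n × (En n × ℝ)) := by fun_prop
    exact (W_cont hv).comp this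
  exact continuous_const.max h

lemma le_MM (hv : Continuous v) (hK : IsCompact K) {p y : En n} (hy : y ∈ K) {s t : ℝ}
    (hs : s ∈ Icc 0 T1) (hst : s ≤ t) : W v x0 p (y, s) ≤ MM v x0 K T1 m0 p t := by
  refine le_trans ?_ (le_max_right _ _)
  have hc : Continuous fun z : En n × ℝ => W v x0 p (z.1, min z.2 t) := by
    have : Continuous fun z : En n × ℝ => ((p, (z.1, min z.2 t)) : En n × (En n × ℝ)) := by fun_prop
    exact (W_cont hv).comp this
  have hb := ((hK.prod (isCompact_Icc (a := (0:ℝ)) (b := T1))).image hc).bddAbove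
  refine le_csSup hb ⟨(y, s), ⟨hy, hs⟩, ?_⟩
  simp [min_eq_left hst]

lemma MM_attained (hv : Continuous v) (hK : IsCompact K) (hne : K.Nonempty) {p : En n} {t : ℝ}
    (ht : t ∈ Icc 0 T1) : MM v x0 K T1 m0 p t = m0 ∨
      ∃ y ∈ K, ∃ s ∈ Icc 0 t, W v x0 p (y, s) = MM v x0 K T1 m0 p t := by
  have hc : Continuous fun z : En n × ℝ => W v x0 p (z.1, min z.2 t) := by
    have : Continuous fun z : En n × ℝ => ((p, (z.1, min z.2 t)) : En n × (En n × ℝ)) := by fun_prop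
    exact (W_cont hv).comp this
  have hT1 : 0 ≤ T1 := ht.1.trans ht.2
  obtain ⟨z, hz, hzeq⟩ := (hK.prod (isCompact_Icc (a := (0:ℝ)) (b := T1))).exists_sSup_image_eq
    (hne.prod (nonempty_Icc.2 hT1)) hc.continuousOn
  rcases max_choice m0 (sSup ((fun z : En n × ℝ => W v x0 p (z.1, min z.2 t)) '' (K ×ˢ Icc 0 T1)))
    with h | h
  · left; exact h
  · right
    refine ⟨z.1, hz.1, min z.2 t, ⟨le_min hz.2.1 ht.1, min_le_right _ _⟩, ?_⟩
    unfold MM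
    rw [h, hzeq]

lemma MM_mono (hv : Continuous v) (hK : IsCompact K) (hne : K.Nonempty) {p : En n} {s t : ℝ}
    (hs : s ∈ Icc 0 T1) (hst : s ≤ t) : MM v x0 K T1 m0 p s ≤ MM v x0 K T1 m0 p t := by
  rcases MM_attained (x0 := x0) (m0 := m0) (p := p) hv hK hne hs with h | ⟨y, hy, σ, hσ, h⟩
  · rw [h]; exact le_max_left _ _
  · rw [← h]; exact le_MM hv hK hy ⟨hσ.1, hσ.2.trans hs.2⟩ (hσ.2.trans hst)

end MMlemmas

/-- The standing data of the proof. -/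
structure Dat {n : ℕ} (Ω : Set (En n)) (u v : En n × ℝ → ℝ) (T T1 r M0 τ0 : ℝ) (x0 : En n) :
    Prop where
  hΩ : IsOpen Ω
  hK : IsCompact (closure Ω)
  hT1 : 0 < T1
  hT : T1 < T
  hr : 0 < r
  hM0 : 0 < M0
  hu : IsC21 u (Ω ×ˢ Ioo (0 : ℝ) T)
  hv : Continuous v
  huv : ∀ x ∈ closure Ω, ∀ t ∈ Icc (0 : ℝ) T, v (x, t) = u (x, t)
  hx0 : x0 ∈ closure Ω
  hτ0 : τ0 ∈ Icc 0 T1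
  hv0 : v (x0, τ0) = M0
  hmax : ∀ x ∈ closure Ω, ∀ t ∈ Icc 0 T1, v (x, t) ≤ M0
  hb1 : ∀ x ∈ frontier Ω, ∀ t ∈ Icc 0 T1, v (x, t) ≤ 0
  hb2 : ∀ x ∈ closure Ω, v (x, 0) ≤ 0
  hd : ∀ x ∈ closure Ω, ‖x - x0‖ ≤ r

namespace Dat

variable {n : ℕ} {Ω : Set (En n)} {u v : En n × ℝ → ℝ} {T T1 r M0 τ0 : ℝ} {x0 : En n}

lemma inner_le (D : Dat Ω u v T T1 r M0 τ0 x0) {p : En n} (hp : ‖p‖ ≤ M0 / (4 * r))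
    {x : En n} (hx : x ∈ closure Ω) : |(inner ℝ p (x - x0) : ℝ)| ≤ M0 / 4 := by
  have hr := D.hr
  have hM := D.hM0
  calc |(inner ℝ p (x - x0) : ℝ)| ≤ ‖p‖ * ‖x - x0‖ := abs_real_inner_le_norm _ _
    _ ≤ M0 / (4 * r) * r := by
        gcongr
        exact D.hd x hx
    _ = M0 / 4 := by field_simp

lemma mem_of_pos (D : Dat Ω u v T T1 r M0 τ0 x0) {x : En n} (hx : x ∈ closure Ω) {t : ℝ}
    (ht : t ∈ Icc 0 T1) (hpos : 0 < v (x, t)) : x ∈ Ω := by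
  by_contra h
  have : x ∈ frontier Ω := by rw [D.hΩ.frontier_eq]; exact ⟨hx, h⟩
  linarith [D.hb1 x this t ht]

lemma exists_t0 (D : Dat Ω u v T T1 r M0 τ0 x0) :
    ∃ t0 ∈ Ioo 0 T1, ∀ x ∈ closure Ω, ∀ t ∈ Icc 0 t0, v (x, t) < M0 / 4 := by
  have hv := D.hv
  have hM := D.hM0
  have h : ∀ᶠ t in 𝓝 (0:ℝ), ∀ x ∈ closure Ω, v (x, t) < M0 / 4 := by
    refine D.hK.eventually_forall_of_forall_eventually fun x hx => ?_
    have hc : Continuous fun z : ℝ × En n => v (z.2, z.1) := by fun_prop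
    refine hc.continuousAt.eventually_lt continuousAt_const ?_
    have := D.hb2 x hx
    simp only
    linarith
  obtain ⟨ε, hε, hb⟩ := Metric.eventually_nhds_iff.1 h
  have hT1 := D.hT1
  refine ⟨min (ε / 2) (T1 / 2), ⟨by positivity, ?_⟩, fun x hx t ht => hb ?_ x hx⟩
  · exact (min_le_right _ _).trans_lt (by linarith)
  · rw [Real.dist_eq, sub_zero, abs_of_nonneg ht.1]
    exact (ht.2.trans (min_le_left _ _)).trans_lt (by linarith)

lemma exists_L (D : Dat Ω u v T T1 r M0 τ0 x0) {t0 : ℝ} (ht0 : t0 ∈ Ioo 0 T1) :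
    ∃ L : ℝ, 0 ≤ L ∧ ∀ x ∈ closure Ω, (∃ t ∈ Icc 0 T1, M0 / 4 ≤ v (x, t)) →
      ∀ t ∈ Icc t0 T1, |Dt u (x, t)| ≤ L := by
  have hv := D.hv
  have hM := D.hM0
  set C : Set (En n × ℝ) := (closure Ω ×ˢ Icc 0 T1) ∩ {z | M0 / 4 ≤ v z} with hC
  have hCc : IsCompact C := (D.hK.prod isCompact_Icc).inter_right (isClosed_le continuous_const hv)
  set K' : Set (En n) := Prod.fst '' C with hK'
  have hK'c : IsCompact K' := hCc.image continuous_fst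
  have hsub : K' ×ˢ Icc t0 T1 ⊆ Ω ×ˢ Ioo (0 : ℝ) T := by
    rintro ⟨x, t⟩ ⟨⟨⟨x', s⟩, ⟨⟨hx', hs⟩, hz⟩, rfl⟩, ht⟩
    have hz' : M0 / 4 ≤ v (x', s) := hz
    refine ⟨D.mem_of_pos hx' hs (by linarith), lt_of_lt_of_le ht0.1 ht.1, lt_of_le_of_lt ht.2 D.hT⟩
  obtain ⟨L, hL⟩ := (hK'c.prod (isCompact_Icc (a := t0) (b := T1))).exists_bound_of_continuousOn
    (D.hu.cont_t.mono hsub)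
  refine ⟨max L 0, le_max_right _ _, fun x hx ⟨s, hs, hvs⟩ t ht => ?_⟩
  have := hL (x, t) ⟨⟨(x, s), ⟨⟨hx, hs⟩, hvs⟩, rfl⟩, ht⟩
  exact (Real.norm_eq_abs _ ▸ this).trans (le_max_left _ _)

lemma hasDerivAt_t (D : Dat Ω u v T T1 r M0 τ0 x0) {x : En n} (hx : x ∈ Ω) {t : ℝ}
    (ht : t ∈ Ioo 0 T) : HasDerivAt (fun s => u (x, s)) (Dt u (x, t)) t :=
  (D.hu.diff_t (x, t) ⟨hx, ht⟩).hasDerivAt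

lemma MM_t0 (D : Dat Ω u v T T1 r M0 τ0 x0) {t0 : ℝ} (ht0 : t0 ∈ Ioo 0 T1)
    (h0 : ∀ x ∈ closure Ω, ∀ t ∈ Icc 0 t0, v (x, t) < M0 / 4) {p : En n}
    (hp : ‖p‖ ≤ M0 / (4 * r)) : MM v x0 (closure Ω) T1 (M0 / 2) p t0 = M0 / 2 := by
  rcases MM_attained (x0 := x0) (m0 := M0 / 2) (p := p) D.hv D.hK ⟨x0, D.hx0⟩
    (Ioo_subset_Icc_self ht0) with h | ⟨y, hy, s, hs, h⟩
  · exact h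
  · refine le_antisymm ?_ (le_max_left _ _)
    rw [← h]
    have h1 := h0 y hy s hs
    have h2 := abs_le.1 (D.inner_le hp hy)
    simp only [W]
    linarith [h2.1]

lemma MM_T1 (D : Dat Ω u v T T1 r M0 τ0 x0) (p : En n) :
    M0 ≤ MM v x0 (closure Ω) T1 (M0 / 2) p T1 := by
  have := le_MM (x0 := x0) (m0 := M0 / 2) (p := p) D.hv D.hK D.hx0 D.hτ0 D.hτ0.2
  simpa [W, D.hv0] using this

lemma lip (D : Dat Ω u v T T1 r M0 τ0 x0) {t0 L : ℝ} (ht0 : t0 ∈ Ioo 0 T1) (hL0 : 0 ≤ L)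
    (hL : ∀ x ∈ closure Ω, (∃ t ∈ Icc 0 T1, M0 / 4 ≤ v (x, t)) →
      ∀ t ∈ Icc t0 T1, |Dt u (x, t)| ≤ L) {p : En n} (hp : ‖p‖ ≤ M0 / (4 * r)) :
    LipschitzOnWith L.toNNReal (MM v x0 (closure Ω) T1 (M0 / 2) p) (Icc t0 T1) := by
  have hM := D.hM0
  refine LipschitzOnWith.of_le_add_mul' L ?_
  intro t ht s hs
  set F := MM v x0 (closure Ω) T1 (M0 / 2) p with hF
  have hsm : s ∈ Icc 0 T1 := ⟨ht0.1.le.trans hs.1, hs.2⟩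
  have htm : t ∈ Icc 0 T1 := ⟨ht0.1.le.trans ht.1, ht.2⟩
  have hnn : 0 ≤ L * dist t s := by positivity
  rcases le_total t s with hts | hst
  · have := MM_mono (x0 := x0) (m0 := M0 / 2) (p := p) D.hv D.hK ⟨x0, D.hx0⟩ htm hts
    linarith
  have hFs : M0 / 2 ≤ F s := le_max_left _ _
  rcases MM_attained (x0 := x0) (m0 := M0 / 2) (p := p) D.hv D.hK ⟨x0, D.hx0⟩ htm with
    h | ⟨y, hy, σ, hσ, h⟩
  · change F t = _ at h; linarith
  change _ = F t at h
  rcases le_or_gt σ s with hσs | hσs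
  · have : W v x0 p (y, σ) ≤ F s := le_MM D.hv D.hK hy ⟨hσ.1, hσ.2.trans htm.2⟩ hσs
    linarith
  have hFt : M0 / 2 ≤ F t := le_max_left _ _
  have h2 := abs_le.1 (D.inner_le hp hy)
  have hW : W v x0 p (y, s) ≤ F s := le_MM D.hv D.hK hy hsm le_rfl
  simp only [W] at h hW
  have hσm : σ ∈ Icc 0 T1 := ⟨hσ.1, hσ.2.trans htm.2⟩
  have hvσ : M0 / 4 ≤ v (y, σ) := by linarith [h2.1]
  have hyΩ : y ∈ Ω := D.mem_of_pos hy hσm (by linarith)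
  have hbd := hL y hy ⟨σ, hσm, hvσ⟩
  have hmv : u (y, σ) - u (y, s) ≤ L * (σ - s) := by
    have := (convex_Icc s σ).norm_image_sub_le_of_norm_hasDerivWithin_le (f := fun s => u (y, s))
      (f' := fun s => Dt u (y, s)) (C := L) (x := s) (y := σ)
      (fun z hz => (D.hasDerivAt_t hyΩ ⟨lt_of_lt_of_le ht0.1 (hs.1.trans hz.1),
        lt_of_le_of_lt (hz.2.trans hσm.2) D.hT⟩).hasDerivWithinAt)
      (fun z hz => hbd z ⟨hs.1.trans hz.1, hz.2.trans hσm.2⟩)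
      (left_mem_Icc.2 hσs.le) (right_mem_Icc.2 hσs.le)
    rw [Real.norm_eq_abs, Real.norm_eq_abs, abs_of_pos (sub_pos.2 hσs)] at this
    exact (le_abs_self _).trans this
  have hT := D.hT
  rw [← D.huv y hy σ ⟨hσm.1, by linarith [hσm.2]⟩, ← D.huv y hy s ⟨hsm.1, by linarith [hsm.2]⟩] at hmv
  have hdist : L * (σ - s) ≤ L * dist t s := by
    rw [Real.dist_eq]
    refine mul_le_mul_of_nonneg_left ((le_abs_self (t - s)).trans' ?_) hL0
    linarith [hσ.2]
  linarith

lemma lintegral_deriv_ge (D : Dat Ω u v T T1 r M0 τ0 x0) {t0 L : ℝ} (ht0 : t0 ∈ Ioo 0 T1)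
    (h0 : ∀ x ∈ closure Ω, ∀ t ∈ Icc 0 t0, v (x, t) < M0 / 4) (hL0 : 0 ≤ L)
    (hL : ∀ x ∈ closure Ω, (∃ t ∈ Icc 0 T1, M0 / 4 ≤ v (x, t)) →
      ∀ t ∈ Icc t0 T1, |Dt u (x, t)| ≤ L) {p : En n} (hp : ‖p‖ ≤ M0 / (4 * r)) :
    ENNReal.ofReal (M0 / 2) ≤ ∫⁻ t in Ioo t0 T1,
      ENNReal.ofReal (deriv (MM v x0 (closure Ω) T1 (M0 / 2) p) t) := by
  set F := MM v x0 (closure Ω) T1 (M0 / 2) p with hF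
  have hlip := D.lip ht0 hL0 hL hp
  rw [← uIcc_of_le ht0.2.le] at hlip
  have hac := hlip.absolutelyContinuousOnInterval
  have h1 := hac.integral_deriv_eq_sub
  have hi := hac.intervalIntegrable_deriv
  rw [intervalIntegrable_iff_integrableOn_Ioo_of_le ht0.2.le] at hi
  rw [intervalIntegral.integral_of_le ht0.2.le, integral_Ioc_eq_integral_Ioo] at h1
  have h2 : M0 / 2 ≤ ∫ t in Ioo t0 T1, deriv F t := by
    have h3 : M0 ≤ F T1 := D.MM_T1 p
    have h4 : F t0 = M0 / 2 := D.MM_t0 ht0 h0 hp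
    change _ = F T1 - F t0 at h1
    change _ ≤ ∫ t in Ioo t0 T1, deriv (MM v x0 (closure Ω) T1 (M0 / 2) p) t
    rw [h1]
    linarith
  refine (ENNReal.ofReal_le_ofReal h2).trans ?_
  rw [integral_eq_lintegral_pos_part_sub_lintegral_neg_part hi]
  refine (ENNReal.ofReal_le_ofReal (sub_le_self _ ENNReal.toReal_nonneg)).trans ?_
  exact ENNReal.ofReal_toReal_le

end Dat

/-- The contact set. -/
def Con {n : ℕ} (Ω : Set (En n)) (u v : En n × ℝ → ℝ) (T1 t0 ρ m0 : ℝ) (x0 : En n) :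
    Set (En n × ℝ) :=
  {X | X ∈ Ω ×ˢ Ioo t0 T1 ∧ ‖grad u X‖ < ρ ∧
    W v x0 (grad u X) X = MM v x0 (closure Ω) T1 m0 (grad u X) X.2}

namespace Dat

variable {n : ℕ} {Ω : Set (En n)} {u v : En n × ℝ → ℝ} {T T1 r M0 τ0 t0 : ℝ} {x0 : En n}

lemma con_mem (D : Dat Ω u v T T1 r M0 τ0 x0) (ht0 : t0 ∈ Ioo 0 T1) {X : En n × ℝ}
    (hX : X ∈ Con Ω u v T1 t0 (M0 / (4 * r)) (M0 / 2) x0) : X ∈ Ω ×ˢ Ioo 0 T :=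
  ⟨hX.1.1, ht0.1.trans hX.1.2.1, hX.1.2.2.trans D.hT⟩

lemma con_max (D : Dat Ω u v T T1 r M0 τ0 x0) (ht0 : t0 ∈ Ioo 0 T1) {X : En n × ℝ}
    (hX : X ∈ Con Ω u v T1 t0 (M0 / (4 * r)) (M0 / 2) x0) {y : En n} (hy : y ∈ closure Ω)
    {s : ℝ} (hs : s ∈ Icc 0 X.2) :
    u (y, s) - inner ℝ (grad u X) (y - x0) ≤ u X - inner ℝ (grad u X) (X.1 - x0) := by
  have h1 := le_MM (x0 := x0) (m0 := M0 / 2) (p := grad u X) D.hv D.hK hy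
    ⟨hs.1, hs.2.trans hX.1.2.2.le⟩ hs.2
  rw [← hX.2.2] at h1
  simp only [W] at h1
  have hQ := D.con_mem ht0 hX
  have e1 : v X = u X := D.huv X.1 (subset_closure hX.1.1) X.2 (Ioo_subset_Icc_self hQ.2)
  rwa [e1, D.huv y hy s ⟨hs.1, hs.2.trans hQ.2.2.le⟩] at h1

lemma con_hess (D : Dat Ω u v T T1 r M0 τ0 x0) (ht0 : t0 ∈ Ioo 0 T1) {X : En n × ℝ}
    (hX : X ∈ Con Ω u v T1 t0 (M0 / (4 * r)) (M0 / 2) x0) : (-hess u X).PosSemidef := by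
  have hQ := D.con_mem ht0 hX
  refine (contact_grad_hess (D.hΩ.prod isOpen_Ioo) D.hu hQ (p := grad u X) (x0 := x0) ?_).2
  filter_upwards [D.hΩ.mem_nhds hX.1.1] with y hy
  exact D.con_max ht0 hX (subset_closure hy) ⟨hQ.2.1.le, le_rfl⟩

lemma con_mono (D : Dat Ω u v T T1 r M0 τ0 x0) (ht0 : t0 ∈ Ioo 0 T1) {X : En n × ℝ}
    (hX : X ∈ Con Ω u v T1 t0 (M0 / (4 * r)) (M0 / 2) x0) {s : ℝ} (hs : s ∈ Icc 0 X.2) :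
    u (X.1, s) ≤ u X := by
  have := D.con_max ht0 hX (subset_closure hX.1.1) hs
  linarith

lemma con_dt (D : Dat Ω u v T T1 r M0 τ0 x0) (ht0 : t0 ∈ Ioo 0 T1) {X : En n × ℝ}
    (hX : X ∈ Con Ω u v T1 t0 (M0 / (4 * r)) (M0 / 2) x0) : 0 ≤ Dt u X := by
  have hQ := D.con_mem ht0 hX
  refine deriv_nonneg_of_left (D.hasDerivAt_t hQ.1 hQ.2) ?_
  filter_upwards [Ioo_mem_nhdsLT hQ.2.1] with s hs
  exact D.con_mono ht0 hX ⟨hs.1.le, hs.2.le⟩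

lemma con_deriv (D : Dat Ω u v T T1 r M0 τ0 x0) (ht0 : t0 ∈ Ioo 0 T1) {X : En n × ℝ}
    (hX : X ∈ Con Ω u v T1 t0 (M0 / (4 * r)) (M0 / 2) x0) :
    deriv (MM v x0 (closure Ω) T1 (M0 / 2) (grad u X)) X.2 ≤ Dt u X := by
  have hQ := D.con_mem ht0 hX
  set F := MM v x0 (closure Ω) T1 (M0 / 2) (grad u X) with hF
  by_cases hd : DifferentiableAt ℝ F X.2
  · have hk : HasDerivAt (fun s => u (X.1, s) - F s) (Dt u X - deriv F X.2) X.2 :=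
      (D.hasDerivAt_t hQ.1 hQ.2).sub hd.hasDerivAt
    have := deriv_nonneg_of_left hk ?_
    · linarith
    filter_upwards [Ioo_mem_nhdsLT hQ.2.1] with s hs
    have hcl : X.1 ∈ closure Ω := subset_closure hX.1.1
    have h1 : W v x0 (grad u X) (X.1, s) ≤ F s :=
      le_MM D.hv D.hK hcl ⟨hs.1.le, hs.2.le.trans hX.1.2.2.le⟩ le_rfl
    have h2 : W v x0 (grad u X) X = F X.2 := hX.2.2
    simp only [W] at h1 h2
    have e1 : v X = u X := D.huv X.1 hcl X.2 (Ioo_subset_Icc_self hQ.2)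
    rw [D.huv X.1 hcl s ⟨hs.1.le, hs.2.le.trans hQ.2.2.le⟩] at h1
    rw [e1] at h2
    change u (X.1, s) - F s ≤ u X - F X.2
    linarith
  · rw [deriv_zero_of_not_differentiableAt hd]
    exact D.con_dt ht0 hX

lemma envelope (D : Dat Ω u v T T1 r M0 τ0 x0) (ht0 : t0 ∈ Ioo 0 T1) {p : En n}
    (hp : ‖p‖ < M0 / (4 * r)) {t : ℝ} (ht : t ∈ Ioo t0 T1)
    (hne : deriv (MM v x0 (closure Ω) T1 (M0 / 2) p) t ≠ 0) :
    ∃ x, (x, t) ∈ Con Ω u v T1 t0 (M0 / (4 * r)) (M0 / 2) x0 ∧ grad u (x, t) = p := by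
  have hM := D.hM0
  set F := MM v x0 (closure Ω) T1 (M0 / 2) p with hF
  have htm : t ∈ Icc 0 T1 := ⟨ht0.1.le.trans ht.1.le, ht.2.le⟩
  have hFt : M0 / 2 ≤ F t := le_max_left _ _
  obtain ⟨x, hx, hxe⟩ : ∃ x ∈ closure Ω, W v x0 p (x, t) = F t := by
    by_contra hcon
    push Not at hcon
    apply hne
    have hlt : ∀ x ∈ closure Ω, W v x0 p (x, t) < F t := fun x hx =>
      lt_of_le_of_ne (le_MM D.hv D.hK hx htm le_rfl) (hcon x hx)
    have hev : ∀ᶠ s in 𝓝 t, ∀ x ∈ closure Ω, W v x0 p (x, s) < F t := by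
      refine D.hK.eventually_forall_of_forall_eventually fun x hx => ?_
      have hc : Continuous fun z : ℝ × En n => W v x0 p (z.2, z.1) := by
        have : Continuous fun z : ℝ × En n => ((p, (z.2, z.1)) : En n × (En n × ℝ)) := by fun_prop
        exact (W_cont D.hv).comp this
      exact hc.continuousAt.eventually_lt continuousAt_const (hlt x hx)
    obtain ⟨ε, hε, hb⟩ := Metric.eventually_nhds_iff.1 hev
    -- the running maximum is constant just after `t`
    have hconst : ∀ᶠ s in 𝓝[>] t, F s = F t := by
      have hmem : Ioo t (min (t + ε) T1) ∈ 𝓝[>] t := Ioo_mem_nhdsGT (lt_min (by linarith) ht.2)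
      filter_upwards [hmem] with s hs
      have hs1 : s < t + ε := hs.2.trans_le (min_le_left _ _)
      have hs2 : s < T1 := hs.2.trans_le (min_le_right _ _)
      have hsm : s ∈ Icc 0 T1 := ⟨htm.1.trans hs.1.le, hs2.le⟩
      refine le_antisymm ?_ (MM_mono D.hv D.hK ⟨x0, D.hx0⟩ htm hs.1.le)
      rcases MM_attained (x0 := x0) (m0 := M0 / 2) (p := p) D.hv D.hK ⟨x0, D.hx0⟩ hsm with
        h | ⟨y, hy, σ, hσ, h⟩
      · change F s = _ at h; linarith
      · change _ = F s at h
        rw [← h]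
        rcases le_or_gt σ t with hσt | hσt
        · exact le_MM D.hv D.hK hy ⟨hσ.1, hσ.2.trans hsm.2⟩ hσt
        · refine (hb ?_ y hy).le
          rw [Real.dist_eq, abs_of_pos (sub_pos.2 hσt)]
          linarith [hσ.2]
    by_cases hd : DifferentiableAt ℝ F t
    · have h1 : HasDerivWithinAt F (deriv F t) (Ioi t) t := hd.hasDerivAt.hasDerivWithinAt
      have h2 : HasDerivWithinAt F 0 (Ioi t) t :=
        (hasDerivWithinAt_const t (Ioi t) (F t)).congr_of_eventuallyEq hconst rfl
      exact (uniqueDiffWithinAt_Ioi t).eq_deriv _ h1 h2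
    · exact deriv_zero_of_not_differentiableAt hd
  have hT := D.hT
  have h2 := abs_le.1 (D.inner_le hp.le hx)
  have hvpos : 0 < v (x, t) := by
    simp only [W] at hxe
    linarith [h2.1]
  have hxΩ := D.mem_of_pos hx htm hvpos
  have htT : t ∈ Ioo 0 T := ⟨ht0.1.trans ht.1, ht.2.trans hT⟩
  have hg : grad u (x, t) = p := by
    refine (contact_grad_hess (D.hΩ.prod isOpen_Ioo) D.hu (X := (x, t)) ⟨hxΩ, htT⟩
      (p := p) (x0 := x0) ?_).1
    filter_upwards [D.hΩ.mem_nhds hxΩ] with y hy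
    have hy' := subset_closure hy
    have h3 : W v x0 p (y, t) ≤ F t := le_MM D.hv D.hK hy' htm le_rfl
    rw [← hxe] at h3
    simp only [W] at h3
    rwa [D.huv y hy' t (Ioo_subset_Icc_self htT), D.huv x hx t (Ioo_subset_Icc_self htT)] at h3
  refine ⟨x, ⟨⟨hxΩ, ht⟩, ?_, ?_⟩, hg⟩
  · rw [hg]; exact hp
  · rw [hg]; exact hxe

end Dat

end ABP
namespace ABP
open Filter Topology

lemma meas_inter {α γ : Type*} [TopologicalSpace α] [MeasurableSpace α] [OpensMeasurableSpace α]
    [TopologicalSpace γ] [MeasurableSpace γ] [BorelSpace γ] [Nonempty γ] {f : α → γ} {Q : Set α}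
    (hf : ContinuousOn f Q) (hQ : MeasurableSet Q) {B : Set γ} (hB : MeasurableSet B) :
    MeasurableSet (Q ∩ f ⁻¹' B) := by
  classical
  obtain ⟨c⟩ := (inferInstance : Nonempty γ)
  have h1 : Measurable (Q.piecewise f (fun _ => c)) :=
    hf.measurable_piecewise continuousOn_const hQ
  have h2 : Q ∩ f ⁻¹' B = Q ∩ (Q.piecewise f (fun _ => c)) ⁻¹' B := by
    ext x
    simp only [mem_inter_iff, mem_preimage]
    refine and_congr_right fun hx => ?_
    rw [piecewise_eq_of_mem _ _ _ hx]
  rw [h2]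
  exact hQ.inter (h1 hB)

lemma meas_indicator {α : Type*} [TopologicalSpace α] [MeasurableSpace α] [OpensMeasurableSpace α]
    {f : α → ℝ≥0∞} {Q A : Set α} (hf : ContinuousOn f Q) (hQ : MeasurableSet Q)
    (hA : MeasurableSet A) (hAQ : A ⊆ Q) : Measurable (A.indicator f) := by
  classical
  have h1 : Measurable (Q.piecewise f (fun _ => 0)) :=
    hf.measurable_piecewise continuousOn_const hQ
  have h2 : A.indicator f = A.indicator (Q.piecewise f (fun _ => 0)) := by
    ext x
    by_cases hx : x ∈ A
    · simp [hx, hAQ hx]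
    · simp [hx]
  rw [h2]
  exact h1.indicator hA

lemma essSup_meas {α β : Type*} [MeasurableSpace α] [MeasurableSpace β] {g : α × β → ℝ≥0∞}
    (hg : Measurable g) (m : Measure β) [SFinite m] :
    Measurable fun x => essSup (fun t => g (x, t)) m := by
  refine measurable_of_Ioi fun c => ?_
  have h : (fun x => essSup (fun t => g (x, t)) m) ⁻¹' Ioi c =
      {x | m (Prod.mk x ⁻¹' (g ⁻¹' Ioi c)) ≠ 0} := by
    ext x
    simp only [mem_preimage, mem_Ioi, mem_setOf_eq]
    rw [← not_le, not_iff_not]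
    constructor
    · intro hle
      have h1 : ∀ᵐ t ∂m, g (x, t) ≤ c :=
        (ENNReal.ae_le_essSup fun t => g (x, t)).mono fun t ht => ht.trans hle
      have h2 : m {t | ¬ g (x, t) ≤ c} = 0 := ae_iff.1 h1
      convert h2 using 2
      ext t; simp
    · intro h0
      refine essSup_le_of_ae_le c (ae_iff.2 ?_)
      convert h0 using 2
      ext t; simp
  rw [h]
  exact (measurable_measure_prodMk_left (hg measurableSet_Ioi)) (measurableSet_singleton 0).compl

lemma add_pow_le' (a b : ℝ≥0∞) (n : ℕ) : (a + b) ^ n ≤ 2 ^ n * (a ^ n + b ^ n) := by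
  have h1 : a + b ≤ 2 * max a b := by
    rw [two_mul]; exact add_le_add (le_max_left _ _) (le_max_right _ _)
  calc (a + b) ^ n ≤ (2 * max a b) ^ n := by gcongr
    _ = 2 ^ n * (max a b) ^ n := mul_pow _ _ _
    _ ≤ 2 ^ n * (a ^ n + b ^ n) := by
        gcongr
        rcases le_total a b with h | h
        · rw [max_eq_right h]; exact le_add_self
        · rw [max_eq_left h]; exact le_self_add

/-- The weight. -/
def wt {n : ℕ} (μ : ℝ) (p : En n) : ℝ≥0∞ := ENNReal.ofReal (((μ + ‖p‖) ^ n)⁻¹)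

lemma wt_cont {n : ℕ} {μ : ℝ} (hμ : 0 < μ) : Continuous (wt (n := n) μ) := by
  unfold wt
  refine ENNReal.continuous_ofReal.comp (Continuous.inv₀ (by fun_prop) fun p => ?_)
  positivity

lemma comp_aux {n : ℕ} {G : En n → ℝ → ℝ} (hG : Continuous (Function.uncurry G))
    {g : En n × ℝ → En n} {s : Set (En n × ℝ)} (hg : ContinuousOn g s) :
    ContinuousOn (fun X => G (g X) X.2) s :=
  hG.comp_continuousOn (hg.prodMk continuousOn_snd)

namespace Dat

variable {n : ℕ} {Ω : Set (En n)} {u v : En n × ℝ → ℝ} {T T1 r M0 τ0 t0 : ℝ} {x0 : En n}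

lemma grad_cont (D : Dat Ω u v T T1 r M0 τ0 x0) : ContinuousOn (grad u) (Ω ×ˢ Ioo 0 T) := by
  unfold grad
  refine (PiLp.continuous_toLp 2 _).comp_continuousOn ?_
  exact continuousOn_pi.2 fun i => D.hu.cont_x i

lemma det_cont (D : Dat Ω u v T T1 r M0 τ0 x0) :
    ContinuousOn (fun X => (hess u X).det) (Ω ×ˢ Ioo 0 T) := by
  have h : ContinuousOn (hess u) (Ω ×ˢ Ioo 0 T) :=
    continuousOn_pi.2 fun i => continuousOn_pi.2 fun j => D.hu.cont_xx i j
  exact (Continuous.matrix_det continuous_id).comp_continuousOn h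

lemma meas_Q (D : Dat Ω u v T T1 r M0 τ0 x0) : MeasurableSet (Ω ×ˢ Ioo (0:ℝ) T) :=
  (D.hΩ.prod isOpen_Ioo).measurableSet

lemma con_meas (D : Dat Ω u v T T1 r M0 τ0 x0) (ht0 : t0 ∈ Ioo 0 T1) :
    MeasurableSet (Con Ω u v T1 t0 (M0 / (4 * r)) (M0 / 2) x0) := by
  have hsub : Ω ×ˢ Ioo t0 T1 ⊆ Ω ×ˢ Ioo (0:ℝ) T :=
    prod_mono le_rfl (Ioo_subset_Ioo ht0.1.le D.hT.le)
  have hm : MeasurableSet (Ω ×ˢ Ioo t0 T1) := (D.hΩ.prod isOpen_Ioo).measurableSet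
  have hg := D.grad_cont.mono hsub
  have h1 : ContinuousOn (fun X => ‖grad u X‖) (Ω ×ˢ Ioo t0 T1) := hg.norm
  have h2 : ContinuousOn (fun X => W v x0 (grad u X) X -
      MM v x0 (closure Ω) T1 (M0 / 2) (grad u X) X.2) (Ω ×ˢ Ioo t0 T1) := by
    have hgp : ContinuousOn (fun X => ((grad u X, X) : En n × (En n × ℝ))) (Ω ×ˢ Ioo t0 T1) :=
      hg.prodMk continuousOn_id
    have hw : ContinuousOn (fun X => W v x0 (grad u X) X) (Ω ×ˢ Ioo t0 T1) :=
      Continuous.comp_continuousOn (g := fun q : En n × (En n × ℝ) => W v x0 q.1 q.2)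
        (W_cont D.hv) hgp
    have hmm : ContinuousOn (fun X => MM v x0 (closure Ω) T1 (M0 / 2) (grad u X) X.2)
        (Ω ×ˢ Ioo t0 T1) :=
      comp_aux (MM_cont (x0 := x0) (T1 := T1) (m0 := M0 / 2) D.hv D.hK) hg
    exact hw.sub hmm
  have := (meas_inter h1 hm (measurableSet_Iio (a := M0 / (4 * r)))).inter
    (meas_inter h2 hm (measurableSet_singleton (0:ℝ)))
  convert this using 1
  ext X
  simp only [Con, mem_setOf_eq, mem_inter_iff, mem_preimage, mem_Iio, mem_singleton_iff, sub_eq_zero]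
  tauto

lemma con_sub (D : Dat Ω u v T T1 r M0 τ0 x0) (ht0 : t0 ∈ Ioo 0 T1) :
    Con Ω u v T1 t0 (M0 / (4 * r)) (M0 / 2) x0 ⊆ Ω ×ˢ Ioo (0:ℝ) T := fun _ hX => D.con_mem ht0 hX

/-- Area formula at fixed time. -/
lemma area_t (D : Dat Ω u v T T1 r M0 τ0 x0) (ht0 : t0 ∈ Ioo 0 T1) {μ : ℝ} (hμ : 0 < μ) {t : ℝ}
    (ht : t ∈ Ioo t0 T1) :
    ∫⁻ p in ball (0 : En n) (M0 / (4 * r)), wt μ p *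
        ENNReal.ofReal (deriv (MM v x0 (closure Ω) T1 (M0 / 2) p) t) ≤
      ∫⁻ x, (Con Ω u v T1 t0 (M0 / (4 * r)) (M0 / 2) x0).indicator (fun X =>
        ENNReal.ofReal |(hess u X).det| * (wt μ (grad u X) * ENNReal.ofReal (Dt u X))) (x, t) := by
  set A := Con Ω u v T1 t0 (M0 / (4 * r)) (M0 / 2) x0 with hA
  set At : Set (En n) := (fun x => (x, t)) ⁻¹' A with hAt
  have hAtm : MeasurableSet At := (by fun_prop : Measurable fun x : En n => (x, t)) (D.con_meas ht0)
  set w : En n → ℝ≥0∞ := (ball (0 : En n) (M0 / (4 * r))).indicator fun p => wt μ p *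
        ENNReal.ofReal (deriv (MM v x0 (closure Ω) T1 (M0 / 2) p) t) with hw
  have hwm : Measurable w := by
    refine Measurable.indicator ?_ measurableSet_ball
    refine (wt_cont hμ).measurable.mul ?_
    have h1 := measurable_deriv_with_param
      (MM_cont (x0 := x0) (T1 := T1) (m0 := M0 / 2) D.hv D.hK)
    exact (h1.comp (by fun_prop : Measurable fun p : En n => (p, t))).ennreal_ofReal
  rw [← lintegral_indicator measurableSet_ball]
  have hmain := area_le hAtm (Φ := fun x => grad u (x, t)) (Φ' := fun x => hop u (x, t))
    (fun x hx => (hasFDerivAt_grad D.hu (D.con_mem ht0 hx)).hasFDerivWithinAt) hwm ?_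
  · refine hmain.trans ?_
    rw [← lintegral_indicator hAtm]
    refine lintegral_mono fun x => ?_
    by_cases hx : x ∈ At
    · have hx' : (x, t) ∈ A := hx
      rw [indicator_of_mem hx, indicator_of_mem hx', hop_det]
      gcongr
      have hb : grad u (x, t) ∈ ball (0 : En n) (M0 / (4 * r)) := by
        simpa using hx'.2.1
      rw [hw, indicator_of_mem hb]
      gcongr
      exact D.con_deriv ht0 hx'
    · rw [indicator_of_notMem hx]; exact zero_le
  · intro p hp
    have hpb : p ∈ ball (0 : En n) (M0 / (4 * r)) := by
      by_contra h; exact hp (indicator_of_notMem h _)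
    rw [hw, indicator_of_mem hpb] at hp
    have hd : deriv (MM v x0 (closure Ω) T1 (M0 / 2) p) t ≠ 0 := by
      intro h; rw [h] at hp; simp at hp
    obtain ⟨x, hx, hxp⟩ := D.envelope ht0 (by simpa using hpb) ht hd
    exact ⟨x, hx, hxp⟩

/-- One-dimensional bound in time. -/
lemma time_bound (D : Dat Ω u v T T1 r M0 τ0 x0) (ht0 : t0 ∈ Ioo 0 T1) (x : En n) :
    ∫⁻ t, (Con Ω u v T1 t0 (M0 / (4 * r)) (M0 / 2) x0).indicator
      (fun X => ENNReal.ofReal (Dt u X)) (x, t) ≤ ENNReal.ofReal M0 := by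
  have hM := D.hM0
  set A := Con Ω u v T1 t0 (M0 / (4 * r)) (M0 / 2) x0 with hA
  set Ax : Set ℝ := (fun t => (x, t)) ⁻¹' A with hAx
  have hAxm : MeasurableSet Ax := (by fun_prop : Measurable fun t : ℝ => (x, t)) (D.con_meas ht0)
  have h1 : ∫⁻ t, A.indicator (fun X => ENNReal.ofReal (Dt u X)) (x, t) =
      ∫⁻ t in Ax, ENNReal.ofReal (Dt u (x, t)) := by
    rw [← lintegral_indicator hAxm]
    rfl
  rw [h1, lintegral_deriv_eq_volume_image_of_monotoneOn (f := fun t => u (x, t)) hAxm]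
  · calc volume ((fun t => u (x, t)) '' Ax) ≤ volume (Icc 0 M0) := by
          refine measure_mono ?_
          rintro _ ⟨t, ht, rfl⟩
          have ht' : (x, t) ∈ A := ht
          have hQ := D.con_mem ht0 ht'
          have hcl : x ∈ closure Ω := subset_closure hQ.1
          have e1 : v (x, t) = u (x, t) := D.huv x hcl t (Ioo_subset_Icc_self hQ.2)
          have hle := D.hmax x hcl t ⟨hQ.2.1.le, ht'.1.2.2.le⟩
          have h3 : W v x0 (grad u (x, t)) (x, t) = _ := ht'.2.2
          have h4 : M0 / 2 ≤ W v x0 (grad u (x, t)) (x, t) := by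
            rw [h3]; exact le_max_left _ _
          have h5 := abs_le.1 (D.inner_le ht'.2.1.le hcl)
          simp only [W] at h4
          constructor
          · simp only; linarith [h5.1]
          · simp only; linarith
      _ = ENNReal.ofReal M0 := by simp
  · intro t ht
    have hQ := D.con_mem ht0 ht
    exact (D.hasDerivAt_t hQ.1 hQ.2).hasDerivWithinAt
  · intro s hs t ht hst
    have hQ := D.con_mem ht0 hs
    exact D.con_mono ht0 (X := (x, t)) ht ⟨hQ.2.1.le, hst⟩

/-- Pointwise bound on the contact set. -/
lemma point_bound (D : Dat Ω u v T T1 r M0 τ0 x0) (ht0 : t0 ∈ Ioo 0 T1) {μ ν : ℝ} (hμ : 0 < μ)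
    (hν : 1 ≤ ν) {f : En n × ℝ → ℝ} {a : En n × ℝ → Matrix (Fin n) (Fin n) ℝ} {b : En n × ℝ → En n}
    (ha : UnifParabolic ν a (Ω ×ˢ Ioo (0 : ℝ) T))
    (hf : ∀ X ∈ Ω ×ˢ Ioo (0 : ℝ) T, f X ≤ -Dt u X + Lop a b u X) {X : En n × ℝ}
    (hX : X ∈ Con Ω u v T1 t0 (M0 / (4 * r)) (M0 / 2) x0) :
    ENNReal.ofReal |(hess u X).det| * wt μ (grad u X) ≤
      (ENNReal.ofReal ν * ((‖f X‖₊ : ℝ≥0∞) * ENNReal.ofReal μ⁻¹ + ‖b X‖₊)) ^ n := by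
  have hQ := D.con_mem ht0 hX
  have hν0 : 0 < ν := by linarith
  obtain ⟨h1, h2⟩ := det_bound hν0 (a X) (-hess u X) (ha X hQ).1 (D.con_hess ht0 hX)
  have hdet : |(-hess u X).det| = |(hess u X).det| := by
    rw [Matrix.det_neg, abs_mul, abs_pow]; simp
  rw [hdet] at h1
  have hS : ∑ i, ∑ j, a X i j * (-hess u X) i j ≤ ‖f X‖ + ‖b X‖ * ‖grad u X‖ := by
    have e1 : ∑ i, ∑ j, a X i j * (-hess u X) i j = - ∑ i, ∑ j, a X i j * Dxx u i j X := by
      simp [hess]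
    have e2 : ∑ i, b X i * Dx u i X = inner ℝ (grad u X) (b X) := by
      simp [PiLp.inner_apply, grad]
    have h3 := hf X hQ
    have h4 := D.con_dt ht0 hX
    have h5 := real_inner_le_norm (grad u X) (b X)
    have h6 : -f X ≤ ‖f X‖ := neg_le_abs (f X)
    rw [Lop, e2] at h3
    rw [e1]
    nlinarith
  set P := ‖grad u X‖ with hP
  have hP0 : 0 ≤ P := norm_nonneg _
  have hreal : |(hess u X).det| * ((μ + P) ^ n)⁻¹ ≤ (ν * (‖f X‖ * μ⁻¹ + ‖b X‖)) ^ n := by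
    have h7 : |(hess u X).det| ≤ (ν * (‖f X‖ + ‖b X‖ * P)) ^ n :=
      h1.trans (pow_le_pow_left₀ h2 (by gcongr) n)
    have h8 : ‖f X‖ + ‖b X‖ * P ≤ (‖f X‖ * μ⁻¹ + ‖b X‖) * (μ + P) := by
      have : (‖f X‖ * μ⁻¹ + ‖b X‖) * (μ + P) =
          ‖f X‖ + ‖b X‖ * P + (‖f X‖ * μ⁻¹ * P + ‖b X‖ * μ) := by
        field_simp; ring
      rw [this]
      have : 0 ≤ ‖f X‖ * μ⁻¹ * P + ‖b X‖ * μ := by positivity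
      linarith
    have h9 : |(hess u X).det| ≤ (ν * (‖f X‖ * μ⁻¹ + ‖b X‖)) ^ n * (μ + P) ^ n := by
      refine h7.trans ?_
      rw [← mul_pow]
      refine pow_le_pow_left₀ (by positivity) ?_ n
      rw [mul_assoc]
      gcongr
    rw [← div_eq_mul_inv]
    exact div_le_of_le_mul₀ (by positivity) (by positivity) h9
  calc ENNReal.ofReal |(hess u X).det| * wt μ (grad u X)
      = ENNReal.ofReal (|(hess u X).det| * ((μ + P) ^ n)⁻¹) := by
        rw [wt, ENNReal.ofReal_mul (abs_nonneg _)]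
    _ ≤ ENNReal.ofReal ((ν * (‖f X‖ * μ⁻¹ + ‖b X‖)) ^ n) := ENNReal.ofReal_le_ofReal hreal
    _ = _ := by
        rw [ENNReal.ofReal_pow (by positivity), ENNReal.ofReal_mul hν0.le,
          ENNReal.ofReal_add (by positivity) (by positivity), ENNReal.ofReal_mul (by positivity)]
        simp only [ofReal_norm, enorm_eq_nnnorm]

end Dat

end ABP
namespace ABP
open Filter Topology

namespace Dat

variable {n : ℕ} {Ω : Set (En n)} {u v : En n × ℝ → ℝ} {T T1 r M0 τ0 t0 : ℝ} {x0 : En n}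

lemma int_meas (D : Dat Ω u v T T1 r M0 τ0 x0) (ht0 : t0 ∈ Ioo 0 T1) {μ : ℝ} (hμ : 0 < μ) :
    Measurable ((Con Ω u v T1 t0 (M0 / (4 * r)) (M0 / 2) x0).indicator (fun X =>
        ENNReal.ofReal |(hess u X).det| * (wt μ (grad u X) * ENNReal.ofReal (Dt u X)))) := by
  have h1 := meas_indicator (ENNReal.continuous_ofReal.comp_continuousOn D.det_cont.abs)
    D.meas_Q (D.con_meas ht0) (D.con_sub ht0)
  have h2 := meas_indicator ((wt_cont hμ).comp_continuousOn D.grad_cont)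
    D.meas_Q (D.con_meas ht0) (D.con_sub ht0)
  have h3 := meas_indicator (ENNReal.continuous_ofReal.comp_continuousOn D.hu.cont_t)
    D.meas_Q (D.con_meas ht0) (D.con_sub ht0)
  convert h1.mul (h2.mul h3) using 1
  ext X
  by_cases hX : X ∈ Con Ω u v T1 t0 (M0 / (4 * r)) (M0 / 2) x0
  · simp [hX]
  · simp [hX]

lemma fiber_bound (D : Dat Ω u v T T1 r M0 τ0 x0) (ht0 : t0 ∈ Ioo 0 T1) {μ ν : ℝ} (hμ : 0 < μ)
    (hν : 1 ≤ ν) {f : En n × ℝ → ℝ} {a : En n × ℝ → Matrix (Fin n) (Fin n) ℝ} {b : En n × ℝ → En n}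
    (ha : UnifParabolic ν a (Ω ×ˢ Ioo (0 : ℝ) T))
    (hf : ∀ X ∈ Ω ×ˢ Ioo (0 : ℝ) T, f X ≤ -Dt u X + Lop a b u X) (x : En n) :
    ∫⁻ t in Ioo t0 T1, (Con Ω u v T1 t0 (M0 / (4 * r)) (M0 / 2) x0).indicator (fun X =>
        ENNReal.ofReal |(hess u X).det| * (wt μ (grad u X) * ENNReal.ofReal (Dt u X))) (x, t) ≤
      (ENNReal.ofReal ν ^ n * (2 ^ n *
        ((essSup (fun t => (‖f (x, t)‖₊ : ℝ≥0∞)) (volume.restrict {t | (x, t) ∈ Ω ×ˢ Ioo (0:ℝ) T})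
          * ENNReal.ofReal μ⁻¹) ^ n +
        (essSup (fun t => (‖b (x, t)‖₊ : ℝ≥0∞))
          (volume.restrict {t | (x, t) ∈ Ω ×ˢ Ioo (0:ℝ) T})) ^ n))) * ENNReal.ofReal M0 := by
  set A := Con Ω u v T1 t0 (M0 / (4 * r)) (M0 / 2) x0 with hA
  by_cases hx : x ∈ Ω
  swap
  · have : ∀ t, A.indicator (fun X =>
        ENNReal.ofReal |(hess u X).det| * (wt μ (grad u X) * ENNReal.ofReal (Dt u X))) (x, t) = 0 :=
      fun t => indicator_of_notMem (fun h => hx (D.con_sub ht0 h).1) _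
    simp only [this, lintegral_zero]
    exact zero_le
  have hset : {t | (x, t) ∈ Ω ×ˢ Ioo (0:ℝ) T} = Ioo 0 T := by ext t; simp [hx]
  rw [hset]
  set F := essSup (fun t => (‖f (x, t)‖₊ : ℝ≥0∞)) (volume.restrict (Ioo 0 T)) with hF
  set B := essSup (fun t => (‖b (x, t)‖₊ : ℝ≥0∞)) (volume.restrict (Ioo 0 T)) with hB
  have hle : volume.restrict (Ioo t0 T1) ≤ volume.restrict (Ioo 0 T) :=
    Measure.restrict_mono (Ioo_subset_Ioo ht0.1.le D.hT.le) le_rfl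
  have hf1 : ∀ᵐ t ∂(volume.restrict (Ioo t0 T1)), (‖f (x, t)‖₊ : ℝ≥0∞) ≤ F :=
    ae_mono hle (ENNReal.ae_le_essSup _)
  have hb1 : ∀ᵐ t ∂(volume.restrict (Ioo t0 T1)), (‖b (x, t)‖₊ : ℝ≥0∞) ≤ B :=
    ae_mono hle (ENNReal.ae_le_essSup _)
  set C : ℝ≥0∞ := ENNReal.ofReal ν ^ n * (2 ^ n * ((F * ENNReal.ofReal μ⁻¹) ^ n + B ^ n)) with hC
  have hm : Measurable (A.indicator (fun X => ENNReal.ofReal (Dt u X))) :=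
    meas_indicator (ENNReal.continuous_ofReal.comp_continuousOn D.hu.cont_t)
      D.meas_Q (D.con_meas ht0) (D.con_sub ht0)
  have hm' : Measurable fun t => A.indicator (fun X => ENNReal.ofReal (Dt u X)) (x, t) :=
    hm.comp (by fun_prop)
  calc ∫⁻ t in Ioo t0 T1, A.indicator (fun X =>
        ENNReal.ofReal |(hess u X).det| * (wt μ (grad u X) * ENNReal.ofReal (Dt u X))) (x, t)
      ≤ ∫⁻ t in Ioo t0 T1, C * A.indicator (fun X => ENNReal.ofReal (Dt u X)) (x, t) := by
        refine lintegral_mono_ae ?_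
        filter_upwards [hf1, hb1] with t h1 h2
        by_cases hX : (x, t) ∈ A
        · rw [indicator_of_mem hX, indicator_of_mem hX, ← mul_assoc]
          gcongr
          refine (D.point_bound ht0 hμ hν ha hf hX).trans ?_
          rw [mul_pow, hC]
          gcongr
          refine le_trans ?_ (add_pow_le' _ _ n)
          gcongr
        · simp [hX]
    _ = C * ∫⁻ t in Ioo t0 T1, A.indicator (fun X => ENNReal.ofReal (Dt u X)) (x, t) :=
        lintegral_const_mul _ hm'
    _ ≤ C * ∫⁻ t, A.indicator (fun X => ENNReal.ofReal (Dt u X)) (x, t) := by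
        exact mul_le_mul_right (setLIntegral_le_lintegral _ _) _
    _ ≤ C * ENNReal.ofReal M0 := by
        gcongr
        exact D.time_bound ht0 x

lemma essF_meas {f : En n × ℝ → ℝ} (hΩ : IsOpen Ω) (hfm : Measurable f) (T : ℝ) :
    Measurable fun x => essSup (fun t => (‖f (x, t)‖₊ : ℝ≥0∞))
      (volume.restrict {t | (x, t) ∈ Ω ×ˢ Ioo (0:ℝ) T}) := by
  have h := (essSup_meas (g := fun X : En n × ℝ => (‖f X‖₊ : ℝ≥0∞)) (by fun_prop)
    (volume.restrict (Ioo (0:ℝ) T))).indicator hΩ.measurableSet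
  convert h using 1
  ext x
  by_cases hx : x ∈ Ω
  · have hset : {t | (x, t) ∈ Ω ×ˢ Ioo (0:ℝ) T} = Ioo 0 T := by ext t; simp [hx]
    rw [indicator_of_mem hx, hset]
  · have hset : {t | (x, t) ∈ Ω ×ˢ Ioo (0:ℝ) T} = ∅ := by ext t; simp [hx]
    rw [indicator_of_notMem hx, hset, Measure.restrict_empty, essSup_measure_zero]
    rfl

lemma swap_bound {n : ℕ} {G : En n → ℝ → ℝ} (hGc : Continuous (Function.uncurry G))
    {w : En n → ℝ≥0∞} (hwm : Measurable w) {I : En n × ℝ → ℝ≥0∞} (hIm : Measurable I)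
    {C : En n → ℝ≥0∞} {c : ℝ≥0∞} {s : Set ℝ} (hs : MeasurableSet s) {bl : Set (En n)}
    (hbl : MeasurableSet bl)
    (h1 : ∀ p ∈ bl, c ≤ ∫⁻ t in s, ENNReal.ofReal (deriv (G p) t))
    (h2 : ∀ t ∈ s, ∫⁻ p in bl, w p * ENNReal.ofReal (deriv (G p) t) ≤ ∫⁻ x, I (x, t))
    (h3 : ∀ x, ∫⁻ t in s, I (x, t) ≤ C x) :
    c * ∫⁻ p in bl, w p ≤ ∫⁻ x, C x := by
  have hGm : Measurable fun q : En n × ℝ => ENNReal.ofReal (deriv (G q.1) q.2) :=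
    (measurable_deriv_with_param hGc).ennreal_ofReal
  have hGp : ∀ p, Measurable fun t => ENNReal.ofReal (deriv (G p) t) := fun p =>
    hGm.comp (by fun_prop : Measurable fun t : ℝ => (p, t))
  calc c * ∫⁻ p in bl, w p
    _ = ∫⁻ p in bl, w p * c := by
        rw [lintegral_mul_const _ hwm, mul_comm]
    _ ≤ ∫⁻ p in bl, w p * ∫⁻ t in s, ENNReal.ofReal (deriv (G p) t) := by
        refine setLIntegral_mono' hbl fun p hp => ?_
        exact mul_le_mul_right (h1 p hp) _
    _ = ∫⁻ p in bl, ∫⁻ t in s, w p * ENNReal.ofReal (deriv (G p) t) := by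
        refine lintegral_congr fun p => ?_
        rw [lintegral_const_mul _ (hGp p)]
    _ = ∫⁻ t in s, ∫⁻ p in bl, w p * ENNReal.ofReal (deriv (G p) t) := by
        refine lintegral_lintegral_swap (Measurable.aemeasurable ?_)
        exact (hwm.comp measurable_fst).mul hGm
    _ ≤ ∫⁻ t in s, ∫⁻ x, I (x, t) := setLIntegral_mono' hs h2
    _ = ∫⁻ x, ∫⁻ t in s, I (x, t) := by
        refine lintegral_lintegral_swap (f := fun t x => I (x, t)) (Measurable.aemeasurable ?_)
        exact hIm.comp measurable_swap
    _ ≤ ∫⁻ x, C x := lintegral_mono h3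

lemma int_bound {n : ℕ} {Ff Bb : En n → ℝ≥0∞} (hFm : Measurable Ff) {μ ν S M0 : ℝ} (hμ : 0 < μ)
    (hfn : ∫⁻ x, Ff x ^ n ≤ ENNReal.ofReal μ ^ n) (hbn : ∫⁻ x, Bb x ^ n ≤ ENNReal.ofReal S) :
    ∫⁻ x, (ENNReal.ofReal ν ^ n * (2 ^ n * ((Ff x * ENNReal.ofReal μ⁻¹) ^ n + Bb x ^ n)))
          * ENNReal.ofReal M0 ≤
      (ENNReal.ofReal ν ^ n * (2 ^ n * (1 + ENNReal.ofReal S))) * ENNReal.ofReal M0 := by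
  have hFm' : Measurable fun x => (Ff x * ENNReal.ofReal μ⁻¹) ^ n := (hFm.mul_const _).pow_const _
  have hF1 : ∫⁻ x, (Ff x * ENNReal.ofReal μ⁻¹) ^ n ≤ 1 := by
    simp only [mul_pow]
    rw [lintegral_mul_const _ (hFm.pow_const _)]
    calc (∫⁻ x, Ff x ^ n) * ENNReal.ofReal μ⁻¹ ^ n
        ≤ ENNReal.ofReal μ ^ n * ENNReal.ofReal μ⁻¹ ^ n := mul_le_mul_left hfn _
      _ = 1 := by
        rw [← mul_pow, ← ENNReal.ofReal_mul hμ.le, mul_inv_cancel₀ hμ.ne']; simp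
  have hK0 : ENNReal.ofReal ν ^ n ≠ ⊤ := by simp
  have hK2 : (2:ℝ≥0∞) ^ n ≠ ⊤ := by simp
  rw [lintegral_mul_const' _ _ ENNReal.ofReal_ne_top, lintegral_const_mul' _ _ hK0,
          lintegral_const_mul' _ _ hK2, lintegral_add_left hFm']
  gcongr

lemma core (D : Dat Ω u v T T1 r M0 τ0 x0) (hn : 0 < n) {μ ν S : ℝ} (hμ : 0 < μ)
    (hν : 1 ≤ ν) {f : En n × ℝ → ℝ} {a : En n × ℝ → Matrix (Fin n) (Fin n) ℝ} {b : En n × ℝ → En n}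
    (ha : UnifParabolic ν a (Ω ×ˢ Ioo (0 : ℝ) T))
    (hf : ∀ X ∈ Ω ×ˢ Ioo (0 : ℝ) T, f X ≤ -Dt u X + Lop a b u X)
    (hfm : Measurable f)
    (hfn : LxnLtinfPow f (Ω ×ˢ Ioo (0 : ℝ) T) ≤ ENNReal.ofReal μ ^ n)
    (hbn : LxnLtinfPow b (Ω ×ˢ Ioo (0 : ℝ) T) ≤ ENNReal.ofReal S)
    {m : ℕ} (hm : μ * 2 ^ m ≤ M0 / (4 * r)) :
    ENNReal.ofReal (M0 / 2) *
        ((m : ℝ≥0∞) * (ENNReal.ofReal ((4:ℝ)⁻¹ ^ n) * volume (ball (0 : En n) 1))) ≤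
      (ENNReal.ofReal ν ^ n * (2 ^ n * (1 + ENNReal.ofReal S))) * ENNReal.ofReal M0 := by
  obtain ⟨t0, ht0, h0⟩ := D.exists_t0
  obtain ⟨L, hL0, hL⟩ := D.exists_L ht0
  have h1 := swap_bound (MM_cont (x0 := x0) (T1 := T1) (m0 := M0 / 2) D.hv D.hK)
    (wt_cont (n := n) hμ).measurable (D.int_meas ht0 hμ) (c := ENNReal.ofReal (M0 / 2))
    measurableSet_Ioo (measurableSet_ball (x := (0 : En n)) (ε := M0 / (4 * r)))
    (fun p hp => D.lintegral_deriv_ge ht0 h0 hL0 hL (mem_ball_zero_iff.1 hp).le)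
    (fun t ht => D.area_t ht0 hμ ht)
    (fun x => D.fiber_bound ht0 hμ hν ha hf x)
  have h2 := int_bound (ν := ν) (M0 := M0) (essF_meas D.hΩ hfm T) hμ hfn hbn
  have h3 := (weight_lower hn hμ m).trans (lintegral_mono_set (ball_subset_ball hm))
  exact ((mul_le_mul_right h3 _).trans h1).trans h2

end Dat

end ABP

namespace ABP
open Filter Topology

lemma exists_dat {n : ℕ} {Ω : Set (En n)} {T r : ℝ} {u : En n × ℝ → ℝ} (hr : 0 < r)
    (hΩ : IsOpen Ω) (hbd : Bornology.IsBounded Ω) (hdiam : Metric.diam Ω ≤ r)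
    (hu : IsC21 u (Ω ×ˢ Ioo (0 : ℝ) T))
    (huc : ContinuousOn u (closure (Ω ×ˢ Ioo (0 : ℝ) T)))
    (hbdry : ∀ X ∈ (frontier Ω ×ˢ Ioo (0 : ℝ) T) ∪ (Ω ×ˢ ({0} : Set ℝ)), u X ≤ 0)
    {X : En n × ℝ} (hX : X ∈ Ω ×ˢ Ioo (0 : ℝ) T) (hpos : 0 < u X) :
    ∃ v T1 M0 τ0 x0, Dat Ω u v T T1 r M0 τ0 x0 ∧ u X ≤ M0 := by
  obtain ⟨x, t1⟩ := X
  obtain ⟨hx, ht1⟩ := hX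
  simp only at hx ht1
  have hT : 0 < T := ht1.1.trans ht1.2
  have hcl : closure (Ω ×ˢ Ioo (0 : ℝ) T) = closure Ω ×ˢ Icc 0 T := by
    rw [closure_prod_eq, closure_Ioo hT.ne]
  obtain ⟨g, hg⟩ := ContinuousMap.exists_restrict_eq (isClosed_closure (s := Ω ×ˢ Ioo (0 : ℝ) T))
    (⟨_, huc.restrict⟩ : C(closure (Ω ×ˢ Ioo (0 : ℝ) T), ℝ))
  have hgu : ∀ y ∈ closure Ω, ∀ t ∈ Icc (0 : ℝ) T, g (y, t) = u (y, t) := by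
    intro y hy t ht
    have hm : (y, t) ∈ closure (Ω ×ˢ Ioo (0 : ℝ) T) := by rw [hcl]; exact ⟨hy, ht⟩
    exact DFunLike.congr_fun hg ⟨(y, t), hm⟩
  have hK : IsCompact (closure Ω) := hbd.isCompact_closure
  have hxc : x ∈ closure Ω := subset_closure hx
  obtain ⟨⟨x0, τ0⟩, hz, hzmax⟩ := (hK.prod (isCompact_Icc (a := (0:ℝ)) (b := t1))).exists_isMaxOn
    ⟨(x, t1), hxc, ht1.1.le, le_rfl⟩ g.continuous.continuousOn
  have hle : u (x, t1) ≤ g (x0, τ0) := by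
    rw [← hgu x hxc t1 (Ioo_subset_Icc_self ht1)]
    exact hzmax (show (x, t1) ∈ closure Ω ×ˢ Icc 0 t1 from ⟨hxc, ht1.1.le, le_rfl⟩)
  refine ⟨g, t1, g (x0, τ0), τ0, x0, ?_, hle⟩
  refine ⟨hΩ, hK, ht1.1, ht1.2, hr, lt_of_lt_of_le hpos hle, hu, g.continuous, hgu, hz.1, hz.2, rfl,
    ?_, ?_, ?_, ?_⟩
  · intro y hy t ht
    exact hzmax (show (y, t) ∈ closure Ω ×ˢ Icc 0 t1 from ⟨hy, ht⟩)
  · intro y hy t ht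
    have hyc : y ∈ closure Ω := frontier_subset_closure hy
    have hc : IsClosed {t : ℝ | g (y, t) ≤ 0} :=
      isClosed_le (g.continuous.comp (by fun_prop)) continuous_const
    have hs : Ioo 0 T ⊆ {t : ℝ | g (y, t) ≤ 0} := by
      intro s hs
      show g (y, s) ≤ 0
      rw [hgu y hyc s (Ioo_subset_Icc_self hs)]
      exact hbdry _ (Or.inl ⟨hy, hs⟩)
    have := closure_minimal hs hc
    rw [closure_Ioo hT.ne] at this
    exact this ⟨ht.1, ht.2.trans ht1.2.le⟩
  · intro y hy
    have hc : IsClosed {y : En n | g (y, 0) ≤ 0} :=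
      isClosed_le (g.continuous.comp (by fun_prop)) continuous_const
    have hs : Ω ⊆ {y : En n | g (y, 0) ≤ 0} := by
      intro z hz
      show g (z, 0) ≤ 0
      rw [hgu z (subset_closure hz) 0 ⟨le_rfl, hT.le⟩]
      exact hbdry _ (Or.inr ⟨hz, rfl⟩)
    exact closure_minimal hs hc hy
  · intro y hy
    rw [← dist_eq_norm]
    refine le_trans ?_ hdiam
    rw [← Metric.diam_closure]
    exact Metric.dist_le_diam_of_mem hbd.closure hy hz.1

end ABP

/-- **Alexandrov–Bakelman–Pucci–Krylov–Tso estimate with critical drift.** -/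
theorem abp_krylov_tso_estimate_with_drift
    (n : ℕ) (hn : 0 < n) (ν S : ℝ) (hν : 1 ≤ ν) :
    ∃ N : ℝ, 0 < N ∧
      ∀ (Ω : Set (En n)) (T r : ℝ) (u f : En n × ℝ → ℝ)
        (a : En n × ℝ → Matrix (Fin n) (Fin n) ℝ) (b : En n × ℝ → En n),
        0 < r → 0 < T →
        IsOpen Ω → IsConnected Ω → Bornology.IsBounded Ω → Metric.diam Ω ≤ r →
        IsC21 u (Ω ×ˢ Ioo (0 : ℝ) T) →
        ContinuousOn u (closure (Ω ×ˢ Ioo (0 : ℝ) T)) →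
        UnifParabolic ν a (Ω ×ˢ Ioo (0 : ℝ) T) →
        LxnLtinfPow b (Ω ×ˢ Ioo (0 : ℝ) T) ≤ ENNReal.ofReal S →
        Measurable f →
        LxnLtinf f (Ω ×ˢ Ioo (0 : ℝ) T) ≠ ⊤ →
        (∀ X ∈ Ω ×ˢ Ioo (0 : ℝ) T, f X ≤ -Dt u X + Lop a b u X) →
        (∀ X ∈ (frontier Ω ×ˢ Ioo (0 : ℝ) T) ∪ (Ω ×ˢ ({0} : Set ℝ)), u X ≤ 0) →
        ∀ X ∈ Ω ×ˢ Ioo (0 : ℝ) T,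
          u X ≤ N * r * (LxnLtinf f (Ω ×ˢ Ioo (0 : ℝ) T)).toReal := by
  set vb : ℝ := (volume (ball (0 : En n) 1)).toReal with hvb
  have hvt : volume (ball (0 : En n) 1) ≠ ⊤ := measure_ball_lt_top.ne
  have hvb0 : 0 < vb := ENNReal.toReal_pos (measure_ball_pos _ _ one_pos).ne' hvt
  have hvE : volume (ball (0 : En n) 1) = ENNReal.ofReal vb := (ENNReal.ofReal_toReal hvt).symm
  set S' : ℝ := max S 0 with hS'
  have hS0 : 0 ≤ S' := le_max_right _ _
  have hν0 : 0 ≤ ν := by linarith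
  obtain ⟨m, hm⟩ := exists_nat_gt (2 * (ν ^ n * (2 ^ n * (1 + S'))) / ((4:ℝ)⁻¹ ^ n * vb))
  have hκ : 0 < (4:ℝ)⁻¹ ^ n * vb := by positivity
  rw [div_lt_iff₀ hκ] at hm
  refine ⟨4 * 2 ^ m, by positivity, ?_⟩
  intro Ω T r u f a b hr hT hΩ _ hbd hdiam hu huc ha hb hfm hftop hf hbdry X hX
  set Nf := (LxnLtinf f (Ω ×ˢ Ioo (0 : ℝ) T)).toReal with hNf
  have hNf0 : 0 ≤ Nf := ENNReal.toReal_nonneg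
  by_cases hpos : u X ≤ 0
  · exact hpos.trans (by positivity)
  push Not at hpos
  obtain ⟨v, T1, M0, τ0, x0, D, hle⟩ := ABP.exists_dat hr hΩ hbd hdiam hu huc hbdry hX hpos
  refine hle.trans ?_
  have key : ∀ μ, Nf < μ → M0 ≤ 4 * 2 ^ m * r * μ := by
    intro μ hμN
    have hμ : 0 < μ := hNf0.trans_lt hμN
    by_contra hcon
    push Not at hcon
    have hm' : μ * 2 ^ m ≤ M0 / (4 * r) := by
      rw [le_div_iff₀ (by positivity)]
      linarith
    have hfn : LxnLtinfPow f (Ω ×ˢ Ioo (0 : ℝ) T) ≤ ENNReal.ofReal μ ^ n := by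
      have e : LxnLtinfPow f (Ω ×ˢ Ioo (0 : ℝ) T) = LxnLtinf f (Ω ×ˢ Ioo (0 : ℝ) T) ^ n := by
        rw [LxnLtinf, ← ENNReal.rpow_natCast, ← ENNReal.rpow_mul, one_div,
          inv_mul_cancel₀ (by exact_mod_cast hn.ne'), ENNReal.rpow_one]
      rw [e]
      gcongr
      rw [← ENNReal.ofReal_toReal hftop]
      exact ENNReal.ofReal_le_ofReal hμN.le
    have hb' : LxnLtinfPow b (Ω ×ˢ Ioo (0 : ℝ) T) ≤ ENNReal.ofReal S' :=
      hb.trans (ENNReal.ofReal_le_ofReal (le_max_left _ _))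
    have hcore := D.core hn hμ hν ha hf hfm hfn hb' hm'
    have hM0 := D.hM0
    have e1 : ENNReal.ofReal (M0 / 2) *
        ((m : ℝ≥0∞) * (ENNReal.ofReal ((4:ℝ)⁻¹ ^ n) * volume (ball (0 : En n) 1))) =
        ENNReal.ofReal (M0 / 2 * (m * ((4:ℝ)⁻¹ ^ n * vb))) := by
      rw [hvE, ENNReal.ofReal_mul (by positivity), ENNReal.ofReal_mul (by positivity),
        ENNReal.ofReal_mul (by positivity), ENNReal.ofReal_natCast]
    have e2 : (ENNReal.ofReal ν ^ n * (2 ^ n * (1 + ENNReal.ofReal S'))) * ENNReal.ofReal M0 =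
        ENNReal.ofReal ((ν ^ n * (2 ^ n * (1 + S'))) * M0) := by
      rw [ENNReal.ofReal_mul (by positivity), ENNReal.ofReal_mul (by positivity),
        ENNReal.ofReal_mul (by positivity), ENNReal.ofReal_add zero_le_one hS0,
        ENNReal.ofReal_pow hν0, ENNReal.ofReal_pow zero_le_two, ENNReal.ofReal_one,
        ENNReal.ofReal_ofNat]
    rw [e1, e2, ENNReal.ofReal_le_ofReal_iff (by positivity)] at hcore
    have := mul_lt_mul_of_pos_right hm hM0
    linarith
  have hc : 0 < 4 * 2 ^ m * r := by positivity
  have h := le_of_forall_gt_imp_ge_of_dense (a₁ := M0 / (4 * 2 ^ m * r)) (a₂ := Nf) fun μ hμ => by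
    rw [div_le_iff₀ hc]
    linarith [key μ hμ]
  rw [div_le_iff₀ hc] at h
  linarith
end
end

section
/- Small-drift propagation of lower bounds: Let α > 0 and r > 0, and set Q := B_r(0) × (−r², (α−1)r²). There exist positive constants s₁ and C₁ depending only on n and ν, and a positive constant k depending only on n, ν and α, with the following property. If u ∈ C^{2,1} on an open set containing the closure of Q satisfies −u_t + Lu ≤ 0 and u > 0 at every point of Q, if u ≥ ℓ on B_{r/2}(0) × {−r²} for some ℓ > 0, and if the drift satisfies ∫_{B_r(0)} (ess sup_{t∈(−r²,(α−1)r²)} |b(x,t)|)ⁿ dx ≤ s₁, then u ≥ C₁ · 2^{−k} · ℓ on B_{r/2}(0) × {(α−1)r²}. -/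
open MeasureTheory ENNReal Metric Set RealInnerProductSpace

noncomputable section

variable {n : ℕ}

/-- Covering estimate for the image of a set under a map with controlled local oscillation. -/
lemma cov_image (K : Set (En n × ℝ)) (G : En n × ℝ → En n) (L : ℝ) (hL : 0 ≤ L)
    (h : ∀ X ∈ K, ∃ δ > 0, ∀ r, 0 < r → r < δ → ∀ Y ∈ K, dist Y.1 X.1 ≤ r →
      dist (G Y) (G X) ≤ L * r) :
    volume (G '' K) ≤ ENNReal.ofReal (L ^ n) * volume (Prod.fst '' K) := by
  classical
  choose! δ hδ hK using h
  set S : Set (En n) := Prod.fst '' K with hS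
  have hex : ∀ x ∈ S, ∃ X ∈ K, X.1 = x := fun x hx => hx
  choose! T hT hT1 using hex
  have key : ∀ ε : ℝ≥0∞, ε ≠ 0 →
      volume (G '' K) ≤ ENNReal.ofReal (L ^ n) * (volume S + ε) := by
    intro ε hε
    obtain ⟨t, r, tc, ts, hr, hcov, hsum⟩ :=
      Besicovitch.exists_closedBall_covering_tsum_measure_le (volume : Measure (En n)) hε
        (fun x => Ioo 0 (δ (T x))) S (by
          intro x hx d hd
          have h1 := hδ (T x) (hT x hx)
          refine ⟨min d (δ (T x)) / 2, ⟨by positivity, ?_⟩, by positivity, ?_⟩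
          · have := min_le_right d (δ (T x)); linarith
          · have := min_le_left d (δ (T x)); linarith)
    have hsub : G '' K ⊆ ⋃ x ∈ t, closedBall (G (T x)) (L * r x) := by
      rintro _ ⟨Y, hY, rfl⟩
      have hYS : Y.1 ∈ S := ⟨Y, hY, rfl⟩
      have := hcov hYS
      simp only [mem_iUnion, mem_closedBall] at this ⊢
      obtain ⟨x, hx, hd⟩ := this
      refine ⟨x, hx, hK (T x) (hT x (ts hx)) (r x) (hr x hx).1 (hr x hx).2 Y hY ?_⟩
      rw [hT1 x (ts hx)]; exact hd
    calc volume (G '' K) ≤ volume (⋃ x ∈ t, closedBall (G (T x)) (L * r x)) := measure_mono hsub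
      _ ≤ ∑' x : t, volume (closedBall (G (T x)) (L * r x)) := measure_biUnion_le _ tc _
      _ = ∑' x : t, ENNReal.ofReal (L ^ n) * volume (closedBall (x : En n) (r x)) := by
          congr 1; ext x
          have h0 := (hr x x.2).1
          rw [Measure.addHaar_closedBall _ _ (by positivity),
            Measure.addHaar_closedBall _ _ h0.le, finrank_euclideanSpace_fin, mul_pow,
            ENNReal.ofReal_mul (by positivity), mul_assoc]
      _ = ENNReal.ofReal (L ^ n) * ∑' x : t, volume (closedBall (x : En n) (r x)) :=
          ENNReal.tsum_mul_left
      _ ≤ _ := by gcongr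
  have hlim : Filter.Tendsto (fun ε : ℝ≥0∞ => ENNReal.ofReal (L ^ n) * (volume S + ε))
      (nhdsWithin 0 (Ioi 0)) (nhds (ENNReal.ofReal (L ^ n) * (volume S + 0))) := by
    refine Filter.Tendsto.mono_left ?_ nhdsWithin_le_nhds
    refine ENNReal.Tendsto.const_mul ?_ (Or.inr ENNReal.ofReal_ne_top)
    exact tendsto_const_nhds.add Filter.tendsto_id
  rw [add_zero] at hlim
  refine ge_of_tendsto hlim ?_
  filter_upwards [self_mem_nhdsWithin] with ε hε
  exact key ε (ne_of_gt hε)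

/-- One dimensional restriction of a twice differentiable function. -/
lemma line_deriv {f : En n → ℝ} {g : En n → En n} {x : En n} (h : En n) {s : ℝ}
    (hf : HasGradientAt f (g (x + s • h)) (x + s • h)) :
    HasDerivAt (fun s : ℝ => f (x + s • h)) (⟪g (x + s • h), h⟫) s := by
  have h1 : HasDerivAt (fun s : ℝ => x + s • h) h s := by
    simpa using ((hasDerivAt_id s).smul_const h).const_add x
  have := hf.hasFDerivAt.comp_hasDerivAt s h1
  rw [InnerProductSpace.toDual_apply_apply] at this
  exact this

/-- Second order lower bound. -/
lemma taylor_lower {f : En n → ℝ} {g : En n → En n} {H : En n →L[ℝ] En n} {x : En n} {c c' : ℝ}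
    (hf : ∀ᶠ z in nhds x, HasGradientAt f (g z) z) (hg : HasFDerivAt g H x)
    (hH : ∀ h, -⟪H h, h⟫ ≤ c * ‖h‖ ^ 2) (hc : c < c') :
    ∃ δ > 0, ∀ z, dist z x < δ → f x + ⟪g x, z - x⟫ - c' / 2 * ‖z - x‖ ^ 2 ≤ f z := by
  have h1 := hg.isLittleO.def (sub_pos.2 hc)
  obtain ⟨δ, hδ, hb⟩ := Metric.eventually_nhds_iff.1 (hf.and h1)
  refine ⟨δ, hδ, fun z hz => ?_⟩
  set h := z - x with hh
  set φ : ℝ → ℝ := fun s => f (x + s • h) - s * ⟪g x, h⟫ + c' / 2 * s ^ 2 * ‖h‖ ^ 2 with hφ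
  have hin : ∀ s ∈ Icc (0 : ℝ) 1, dist (x + s • h) x < δ := by
    intro s hs
    rw [dist_eq_norm, add_sub_cancel_left, norm_smul, Real.norm_of_nonneg hs.1]
    rw [dist_eq_norm] at hz
    calc s * ‖h‖ ≤ 1 * ‖h‖ := by gcongr; exact hs.2
      _ < δ := by rwa [one_mul]
  have hd : ∀ s ∈ Icc (0 : ℝ) 1, HasDerivAt φ
      (⟪g (x + s • h), h⟫ - ⟪g x, h⟫ + c' * s * ‖h‖ ^ 2) s := by
    intro s hs
    have h2 := line_deriv h (hb (hin s hs)).1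
    have h3 : HasDerivAt (fun s : ℝ => s * ⟪g x, h⟫) (⟪g x, h⟫) s := by
      simpa using (hasDerivAt_id s).mul_const (⟪g x, h⟫)
    have h4 : HasDerivAt (fun s : ℝ => c' / 2 * s ^ 2 * ‖h‖ ^ 2) (c' * s * ‖h‖ ^ 2) s := by
      have := ((hasDerivAt_pow 2 s).const_mul (c' / 2)).mul_const (‖h‖ ^ 2)
      exact this.congr_deriv (by push_cast; ring)
    exact (h2.sub h3).add h4
  have hmono : MonotoneOn φ (Icc 0 1) := by
    refine monotoneOn_of_hasDerivWithinAt_nonneg (convex_Icc 0 1)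
      (fun s hs => (hd s hs).continuousAt.continuousWithinAt)
      (fun s hs => (hd s (interior_subset hs)).hasDerivWithinAt) ?_
    intro s hs
    have hs := interior_subset hs
    have h5 := (hb (hin s hs)).2
    rw [add_sub_cancel_left] at h5
    set e := g (x + s • h) - g x - H (s • h) with he
    have h6 : g (x + s • h) = e + g x + s • H h := by rw [he, map_smul]; abel
    rw [norm_smul, Real.norm_of_nonneg hs.1] at h5
    have h7 : -(‖e‖ * ‖h‖) ≤ ⟪e, h⟫ := (abs_le.1 (abs_real_inner_le_norm e h)).1
    rw [h6, inner_add_left, inner_add_left, inner_smul_left]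
    have h8 := hH h
    have h9 : ‖e‖ * ‖h‖ ≤ (c' - c) * (s * ‖h‖) * ‖h‖ := by gcongr
    have h10 : s * -⟪H h, h⟫ ≤ s * (c * ‖h‖ ^ 2) := mul_le_mul_of_nonneg_left h8 hs.1
    simp only [conj_trivial]
    nlinarith
  have := hmono (left_mem_Icc.2 zero_le_one) (right_mem_Icc.2 zero_le_one) zero_le_one
  simp only [hφ, zero_smul, add_zero, one_smul] at this
  have hz2 : x + h = z := by rw [hh]; abel
  rw [hz2] at this
  linarith

/-- Second order condition at a local maximum (relative to an affine function). -/
lemma hess_nonpos {f : En n → ℝ} {g : En n → En n} {H : En n →L[ℝ] En n} {x : En n}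
    (hf : ∀ᶠ z in nhds x, HasGradientAt f (g z) z) (hg : HasFDerivAt g H x)
    (hmax : ∀ᶠ z in nhds x, f z ≤ f x + ⟪g x, z - x⟫) (h : En n) : ⟪H h, h⟫ ≤ 0 := by
  by_contra! hpos
  set θ := ⟪H h, h⟫ with hθ
  have hc : Filter.Tendsto (fun s : ℝ => x + s • h) (nhds 0) (nhds x) := by
    have : Continuous (fun s : ℝ => x + s • h) := by fun_prop
    simpa using this.tendsto 0
  set φ : ℝ → ℝ := fun s => f (x + s • h) - s * ⟪g x, h⟫ - θ / 4 * s ^ 2 with hφ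
  have hd : ∀ᶠ s in nhds (0 : ℝ), HasDerivAt φ
      (⟪g (x + s • h), h⟫ - ⟪g x, h⟫ - θ / 2 * s) s := by
    filter_upwards [hc.eventually hf] with s hs
    have h2 := line_deriv h hs
    have h3 : HasDerivAt (fun s : ℝ => s * ⟪g x, h⟫) (⟪g x, h⟫) s := by
      simpa using (hasDerivAt_id s).mul_const (⟪g x, h⟫)
    have h4 : HasDerivAt (fun s : ℝ => θ / 4 * s ^ 2) (θ / 2 * s) s := by
      have := ((hasDerivAt_pow 2 s).const_mul (θ / 4))
      exact this.congr_deriv (by push_cast; ring)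
    exact (h2.sub h3).sub h4
  have hd1 : deriv φ =ᶠ[nhds 0] fun s => ⟪g (x + s • h), h⟫ - ⟪g x, h⟫ - θ / 2 * s := by
    filter_upwards [hd] with s hs using hs.deriv
  have hd2 : HasDerivAt (fun s : ℝ => ⟪g (x + s • h), h⟫ - ⟪g x, h⟫ - θ / 2 * s)
      (θ - θ / 2) 0 := by
    have h1 : HasDerivAt (fun s : ℝ => x + s • h) h 0 := by
      simpa using ((hasDerivAt_id (0 : ℝ)).smul_const h).const_add x
    have hg' : HasFDerivAt g H (x + (0 : ℝ) • h) := by simpa using hg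
    have h2 := hg'.comp_hasDerivAt (0 : ℝ) h1
    have h3 := (h2.inner ℝ (hasDerivAt_const (0 : ℝ) h)).sub_const (⟪g x, h⟫)
    have h4 := h3.sub ((hasDerivAt_id (0 : ℝ)).const_mul (θ / 2))
    refine h4.congr_deriv ?_
    simp [hθ]
  have hmin : IsLocalMin φ 0 := by
    refine isLocalMin_of_deriv_deriv_pos ?_ ?_ hd.self_of_nhds.continuousAt
    · rw [hd1.deriv_eq, hd2.deriv]; linarith
    · rw [hd.self_of_nhds.deriv]; simp
  have hfin : ∀ᶠ s in nhdsWithin (0 : ℝ) (Ioi 0), False := by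
    filter_upwards [nhdsWithin_le_nhds hmin, nhdsWithin_le_nhds (hc.eventually hmax),
      self_mem_nhdsWithin] with s h1 h2 h3
    have h3' : (0 : ℝ) < s := h3
    simp only [hφ, zero_smul, add_zero] at h1
    rw [add_sub_cancel_left, inner_smul_right] at h2
    nlinarith [mul_pos hpos (pow_pos h3' 2)]
  obtain ⟨_, hF⟩ := hfin.exists
  exact hF

/-- Linear algebra: the trace controls a nonnegative symmetric matrix. -/
lemma psd_bounds (Q : Matrix (Fin n) (Fin n) ℝ) (hsym : ∀ i j, Q i j = Q j i)
    (hpos : ∀ h : Fin n → ℝ, 0 ≤ ∑ i, ∑ j, Q i j * h i * h j) :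
    (∀ h : Fin n → ℝ, ∑ i, ∑ j, Q i j * h i * h j ≤ (∑ i, Q i i) * ∑ i, h i ^ 2) ∧
    (∀ (A : Matrix (Fin n) (Fin n) ℝ) (c : ℝ),
      (∀ ξ : Fin n → ℝ, c * (∑ i, ξ i ^ 2) ≤ ∑ i, ∑ j, A i j * ξ i * ξ j) →
      c * ∑ i, Q i i ≤ ∑ i, ∑ j, A i j * Q i j) := by
  have hQ : Q.PosSemidef := by
    refine Matrix.PosSemidef.of_dotProduct_mulVec_nonneg ?_ ?_
    · ext i j; simp [hsym j i]
    · intro h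
      have := hpos h
      simp only [dotProduct, Matrix.mulVec, star_trivial, Finset.mul_sum]
      refine this.trans_eq (Finset.sum_congr rfl fun i _ => Finset.sum_congr rfl fun j _ => ?_)
      ring
  obtain ⟨m, C, hC⟩ := Matrix.posSemidef_iff_eq_sum_vecMulVec.mp hQ
  have hij : ∀ i j, Q i j = ∑ k, C k i * C k j := by
    intro i j; rw [hC, Matrix.sum_apply]; simp [Matrix.vecMulVec_apply]
  have htr : ∑ i, Q i i = ∑ k, ∑ i, C k i ^ 2 := by
    simp only [hij]; rw [Finset.sum_comm]; simp [sq]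
  constructor
  · intro h
    have : ∑ i, ∑ j, Q i j * h i * h j = ∑ k, (∑ i, C k i * h i) ^ 2 := by
      simp only [hij, sq, Finset.sum_mul, Finset.mul_sum]
      rw [Finset.sum_congr rfl (fun i _ => Finset.sum_comm), Finset.sum_comm]
      refine Finset.sum_congr rfl fun k _ => ?_
      rw [Finset.sum_comm]
      refine Finset.sum_congr rfl fun i _ => Finset.sum_congr rfl fun j _ => by ring
    rw [this, htr, Finset.sum_mul]
    exact Finset.sum_le_sum fun k _ => Finset.sum_mul_sq_le_sq_mul_sq _ _ _
  · intro A c hA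
    have : ∑ i, ∑ j, A i j * Q i j = ∑ k, ∑ i, ∑ j, A i j * C k i * C k j := by
      simp only [hij, Finset.mul_sum]
      rw [Finset.sum_congr rfl (fun i _ => Finset.sum_comm), Finset.sum_comm]
      refine Finset.sum_congr rfl fun k _ => ?_
      refine Finset.sum_congr rfl fun i _ => Finset.sum_congr rfl fun j _ => by ring
    rw [this, htr, Finset.mul_sum]
    exact Finset.sum_le_sum fun k _ => hA _


/-- Abstract Alexandrov, Bakelman, Pucci type estimate, with an arbitrary error `η`. -/
lemma abp_eta (v τ : En n × ℝ → ℝ) (G : En n × ℝ → En n)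
    (Hm : En n × ℝ → En n →L[ℝ] En n) (H : En n → ℝ≥0∞) (y x0 : En n) (R t0 t1 M : ℝ)
    (hR : 0 < R) (ht : t0 ≤ t1) (hM : 0 < M) (hx0 : x0 ∈ closedBall y R)
    (hv : ContinuousOn v (closedBall y R ×ˢ Icc t0 t1))
    (hG : ContinuousOn G (closedBall y R ×ˢ Icc t0 t1))
    (hτ : ContinuousOn τ (closedBall y R ×ˢ Icc t0 t1))
    (hbd0 : ∀ x ∈ closedBall y R, v (x, t0) ≤ 0)
    (hbd1 : ∀ x, dist x y = R → ∀ t ∈ Icc t0 t1, v (x, t) ≤ 0)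
    (hM0 : M ≤ v (x0, t1))
    (hgrad : ∀ x ∈ ball y R, ∀ t ∈ Icc t0 t1,
      HasGradientAt (fun z => v (z, t)) (G (x, t)) x)
    (hhess : ∀ x ∈ ball y R, ∀ t ∈ Icc t0 t1,
      HasFDerivAt (fun z => G (z, t)) (Hm (x, t)) x)
    (hB : ∀ x ∈ ball y R, ∀ t ∈ Icc t0 t1, t0 < t → 0 < v (x, t) →
      ‖G (x, t)‖ ≤ M / (4 * R) → (∀ h, ⟪Hm (x, t) h, h⟫ ≤ 0) →
      (∀ s ∈ Icc t0 t1, v (x, s) ≤ v (x, t)) →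
      (∀ h, -⟪Hm (x, t) h, h⟫ ≤ τ (x, t) * ‖h‖ ^ 2) ∧ ENNReal.ofReal (τ (x, t)) ≤ H x)
    (η : ℝ) (hη : 0 < η) :
    volume (ball (0 : En n) (M / (4 * R))) ≤
      ENNReal.ofReal ((2 * η) ^ n) * volume (closedBall y R) +
        ENNReal.ofReal (4 ^ n) * ∫⁻ x in ball y R, H x ^ n := by
  classical
  set D : Set (En n × ℝ) := closedBall y R ×ˢ Icc t0 t1 with hD
  set m := M / (4 * R) with hm
  have hmpos : 0 < m := by positivity
  have hmR : m * (2 * R) < M := by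
    rw [hm]; field_simp; linarith
  have hDc : IsCompact D := (isCompact_closedBall y R).prod isCompact_Icc
  have hX0 : (x0, t1) ∈ D := ⟨hx0, right_mem_Icc.2 ht⟩
  -- contact set
  set K : Set (En n × ℝ) :=
    {X | X ∈ D ∧ ‖G X‖ ≤ m ∧ ∀ Z ∈ D, v Z ≤ v X + ⟪G X, Z.1 - X.1⟫} with hK
  have hKD : K ⊆ D := fun X hX => hX.1
  have hKclosed : IsClosed K := by
    have hK2 : K = (D ∩ (fun X => ‖G X‖) ⁻¹' Iic m) ∩
        ⋂ Z : D, (D ∩ (fun X => v X + ⟪G X, Z.1.1 - X.1⟫) ⁻¹' Ici (v Z)) := by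
      ext X
      simp only [hK, mem_ofPred_eq, mem_inter_iff, mem_preimage, mem_Iic, mem_iInter, mem_Ici,
        Subtype.forall]
      constructor
      · rintro ⟨h1, h2, h3⟩
        exact ⟨⟨h1, h2⟩, fun Z hZ => ⟨h1, h3 Z hZ⟩⟩
      · rintro ⟨⟨h1, h2⟩, h3⟩
        exact ⟨h1, h2, fun Z hZ => (h3 Z hZ).2⟩
    rw [hK2]
    refine IsClosed.inter (hG.norm.preimage_isClosed_of_isClosed hDc.isClosed isClosed_Iic) ?_
    refine isClosed_iInter fun Z => ?_
    refine ContinuousOn.preimage_isClosed_of_isClosed ?_ hDc.isClosed isClosed_Ici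
    exact hv.add (hG.inner (𝕜 := ℝ) (by fun_prop))
  have hKc : IsCompact K := hDc.of_isClosed_subset hKclosed hKD
  have hdist : ∀ x ∈ closedBall y R, ∀ x' ∈ closedBall y R, ‖x - x'‖ ≤ 2 * R := by
    intro x hx x' hx'
    rw [← dist_eq_norm]
    have := dist_triangle_right x x' y
    simp only [mem_closedBall] at hx hx'
    linarith
  -- contact points are interior
  have hinterior : ∀ X ∈ D, ∀ p : En n, ‖p‖ ≤ m → (∀ Z ∈ D, v Z ≤ v X + ⟪p, Z.1 - X.1⟫) →
      0 < v X ∧ X.1 ∈ ball y R ∧ t0 < X.2 := by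
    intro X hX p hp hmax
    have h1 := hmax _ hX0
    have h2 : ⟪p, x0 - X.1⟫ ≤ m * (2 * R) :=
      (real_inner_le_norm _ _).trans (by gcongr; exact hdist _ hx0 _ hX.1)
    have h3 : 0 < v X := by simp only at h1; linarith
    refine ⟨h3, ?_, ?_⟩
    · rcases lt_or_eq_of_le (mem_closedBall.1 hX.1) with h | h
      · exact h
      · exact absurd (hbd1 X.1 h X.2 hX.2) (not_le.2 h3)
    · rcases lt_or_eq_of_le hX.2.1 with h | h
      · exact h
      · have h4 := hbd0 X.1 hX.1
        rw [h] at h4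
        exact absurd h4 (not_le.2 h3)
  -- every slope is attained
  have hsurj : ball (0 : En n) m ⊆ G '' K := by
    intro p hp
    rw [mem_ball_zero_iff] at hp
    obtain ⟨X, hX, hXmax⟩ := hDc.exists_isMaxOn ⟨_, hX0⟩
      (f := fun X => v X - ⟪p, X.1⟫)
      (hv.sub (continuousOn_const.inner (𝕜 := ℝ) (by fun_prop)))
    have hmax : ∀ Z ∈ D, v Z ≤ v X + ⟪p, Z.1 - X.1⟫ := by
      intro Z hZ
      have := hXmax hZ
      simp only [mem_ofPred_eq] at this
      rw [inner_sub_right]; linarith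
    obtain ⟨h1, h2, h3⟩ := hinterior X hX p hp.le hmax
    have hGp : G X = p := by
      have hg := hgrad X.1 h2 X.2 hX.2
      have hl : IsLocalMax (fun z => v (z, X.2) - ⟪p, z⟫) X.1 := by
        filter_upwards [isOpen_ball.mem_nhds h2] with z hz
        exact hXmax (⟨ball_subset_closedBall hz, hX.2⟩ : (z, X.2) ∈ D)
      have hf : HasFDerivAt (fun z => v (z, X.2) - ⟪p, z⟫)
          ((InnerProductSpace.toDual ℝ (En n)) (G X) - (innerSL ℝ p)) X.1 :=
        hg.hasFDerivAt.sub (innerSL ℝ p).hasFDerivAt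
      have h0 := hl.hasFDerivAt_eq_zero hf
      have h00 : ⟪G X, G X - p⟫ - ⟪p, G X - p⟫ = 0 := by
        have := congrArg (fun L => L (G X - p)) h0
        simpa using this
      rw [← inner_sub_left, inner_self_eq_zero] at h00
      exact sub_eq_zero.1 h00
    exact ⟨X, ⟨hX, hGp ▸ hp.le, fun Z hZ => by rw [hGp]; exact hmax Z hZ⟩, hGp⟩
  -- information at contact points
  have hinfo : ∀ X ∈ K, X.1 ∈ ball y R ∧ (∀ h, -⟪Hm X h, h⟫ ≤ τ X * ‖h‖ ^ 2) ∧
      ENNReal.ofReal (τ X) ≤ H X.1 := by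
    intro X hX
    obtain ⟨h1, h2, h3⟩ := hinterior X hX.1 (G X) hX.2.1 hX.2.2
    refine ⟨h2, hB X.1 h2 X.2 hX.1.2 h3 h1 hX.2.1 ?_ ?_⟩
    · refine hess_nonpos (f := fun z => v (z, X.2)) (g := fun z => G (z, X.2)) ?_
        (hhess X.1 h2 X.2 hX.1.2) ?_
      · filter_upwards [isOpen_ball.mem_nhds h2] with z hz using hgrad z hz X.2 hX.1.2
      · filter_upwards [isOpen_ball.mem_nhds h2] with z hz
        exact hX.2.2 (z, X.2) ⟨ball_subset_closedBall hz, hX.1.2⟩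
    · intro s hs
      simpa using hX.2.2 (X.1, s) ⟨hX.1.1, hs⟩
  -- local oscillation of slopes
  have hosc : ∀ c : ℝ, 0 ≤ c → ∀ X ∈ K, τ X < c → ∃ δ > 0, ∀ r, 0 < r → r < δ → ∀ Y ∈ K,
      dist Y.1 X.1 ≤ r → dist (G Y) (G X) ≤ (2 * c) * r := by
    intro c hc0 X hX hc
    obtain ⟨h2, h3, -⟩ := hinfo X hX
    obtain ⟨δ, hδ, hT⟩ := taylor_lower (f := fun z => v (z, X.2)) (g := fun z => G (z, X.2))
      (by filter_upwards [isOpen_ball.mem_nhds h2] with z hz using hgrad z hz X.2 hX.1.2)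
      (hhess X.1 h2 X.2 hX.1.2) h3 hc
    obtain ⟨δ', hδ', hsub⟩ := Metric.isOpen_iff.1 (isOpen_ball (x := y) (ε := R)) X.1 h2
    refine ⟨min δ δ' / 2, by positivity, fun r hr hrd Y hY hYX => ?_⟩
    have hm1 := min_le_left δ δ'
    have hm2 := min_le_right δ δ'
    set q := G X - G Y with hq
    by_cases hq0 : q = 0
    · have : G X = G Y := sub_eq_zero.1 hq0
      rw [this, dist_self]
      positivity
    have hqn : 0 < ‖q‖ := norm_pos_iff.2 hq0
    set z := Y.1 + (r / ‖q‖) • q with hz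
    have hzY : ‖z - Y.1‖ = r := by
      rw [hz, add_sub_cancel_left, norm_smul, Real.norm_of_nonneg (by positivity)]
      field_simp
    have hzX : ‖z - X.1‖ ≤ 2 * r := by
      have := norm_sub_le_norm_sub_add_norm_sub z Y.1 X.1
      rw [dist_eq_norm] at hYX
      linarith
    have hzD : (z, X.2) ∈ D := by
      refine ⟨ball_subset_closedBall (hsub ?_), hX.1.2⟩
      rw [mem_ball, dist_eq_norm]; linarith
    have i1 := hT z (by rw [dist_eq_norm]; linarith)
    have i2 := hY.2.2 (z, X.2) hzD
    have i3 := hX.2.2 Y hY.1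
    simp only at i1 i2 i3
    have i4 : ⟪q, z - Y.1⟫ = r * ‖q‖ := by
      rw [hz, add_sub_cancel_left, inner_smul_right, real_inner_self_eq_norm_sq]
      field_simp
    have i5 : ⟪q, z - Y.1⟫ = ⟪G X, z - X.1⟫ - ⟪G X, Y.1 - X.1⟫ - ⟪G Y, z - Y.1⟫ := by
      simp only [hq, inner_sub_left, inner_sub_right]
      ring
    have i6 : r * ‖q‖ ≤ c / 2 * ‖z - X.1‖ ^ 2 := by
      rw [← i4, i5]; linarith
    have i7 : c / 2 * ‖z - X.1‖ ^ 2 ≤ c / 2 * (2 * r) ^ 2 := by gcongr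
    rw [dist_comm, dist_eq_norm, ← hq]
    have i8 : r * ‖q‖ ≤ r * (2 * c * r) := by nlinarith
    exact le_of_mul_le_mul_left i8 hr
  -- level sets
  set E : ℝ → Set (En n) := fun c => Prod.fst '' {X | X ∈ K ∧ c ≤ τ X} with hE
  have hEm : ∀ c, MeasurableSet (E c) := by
    intro c
    have hcl : IsClosed (K ∩ τ ⁻¹' Ici c) :=
      (hτ.mono hKD).preimage_isClosed_of_isClosed hKclosed isClosed_Ici
    have hc : IsCompact (K ∩ τ ⁻¹' Ici c) := hKc.of_isClosed_subset hcl inter_subset_left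
    exact (hc.image continuous_fst).isClosed.measurableSet
  have hEmono : ∀ c c', c ≤ c' → E c' ⊆ E c := by
    rintro c c' hcc _ ⟨X, ⟨hX, h⟩, rfl⟩
    exact ⟨X, ⟨hX, hcc.trans h⟩, rfl⟩
  set lev : ℕ → ℝ := fun k => 2 ^ k * η with hlev
  have hlev0 : ∀ k, 0 < lev k := fun k => by simp only [hlev]; positivity
  have hlevs : ∀ k, lev (k + 1) = 2 * lev k := fun k => by simp only [hlev, pow_succ]; ring
  have hlevmono : Monotone lev := monotone_nat_of_le_succ fun k => by
    rw [hlevs]; linarith [hlev0 k]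
  set S : ℕ → Set (En n) := fun k => E (lev k) \ E (lev (k + 1)) with hS
  have hSm : ∀ k, MeasurableSet (S k) := fun k => (hEm _).diff (hEm _)
  have hSd : Pairwise (Function.onFun Disjoint S) := by
    have : ∀ i j, i < j → Disjoint (S i) (S j) := by
      intro i j hij
      rw [Set.disjoint_left]
      intro x hx hx'
      exact hx.2 (hEmono _ _ (hlevmono hij) hx'.1)
    intro i j hij
    rcases lt_or_gt_of_ne hij with h | h
    · exact this i j h
    · exact (this j i h).symm
  have hSsub : (⋃ k, S k) ⊆ ball y R := by
    intro x hx
    obtain ⟨k, hk⟩ := mem_iUnion.1 hx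
    obtain ⟨X, ⟨hX, -⟩, rfl⟩ := hk.1
    exact (hinfo X hX).1
  have hKcov : K ⊆ {X | X ∈ K ∧ X.1 ∉ E η} ∪ ⋃ k, {X | X ∈ K ∧ X.1 ∈ S k} := by
    intro X hX
    by_cases h : X.1 ∈ E η
    · right
      obtain ⟨C, hC⟩ := hKc.bddAbove_image (hτ.mono hKD)
      have hex : ∃ k, X.1 ∉ E (lev k) := by
        obtain ⟨k, hk⟩ := pow_unbounded_of_one_lt (C / η) (one_lt_two)
        refine ⟨k, ?_⟩
        rintro ⟨Y, ⟨hY, hY2⟩, -⟩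
        have h1 := hC ⟨Y, hY, rfl⟩
        rw [div_lt_iff₀ hη] at hk
        have : lev k ≤ C := hY2.trans h1
        simp only [hlev] at this
        linarith
      have hne : Nat.find hex ≠ 0 := by
        intro h0
        have := Nat.find_spec hex
        rw [h0] at this
        exact this (by simpa [hlev] using h)
      obtain ⟨k, hk⟩ := Nat.exists_eq_succ_of_ne_zero hne
      refine mem_iUnion.2 ⟨k, hX, ?_, ?_⟩
      · have := Nat.find_min hex (m := k) (by omega)
        simpa using this
      · have := Nat.find_spec hex
        rw [hk] at this
        exact this
    · left; exact ⟨hX, h⟩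
  have hb0 : volume (G '' {X | X ∈ K ∧ X.1 ∉ E η}) ≤
      ENNReal.ofReal ((2 * η) ^ n) * volume (closedBall y R) := by
    refine (cov_image _ G (2 * η) (by positivity) ?_).trans ?_
    · rintro X ⟨hX, hXE⟩
      have hlt : τ X < η := by
        by_contra! hge
        exact hXE ⟨X, ⟨hX, hge⟩, rfl⟩
      obtain ⟨δ, hδ, h⟩ := hosc η hη.le X hX hlt
      exact ⟨δ, hδ, fun r hr hrd Y hY => h r hr hrd Y hY.1⟩
    · gcongr
      rintro _ ⟨X, ⟨hX, -⟩, rfl⟩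
      exact hX.1.1
  have hbk : ∀ k, volume (G '' {X | X ∈ K ∧ X.1 ∈ S k}) ≤
      ENNReal.ofReal (4 ^ n) * ∫⁻ x in S k, H x ^ n := by
    intro k
    refine (cov_image _ G (2 * lev (k + 1)) (by have := hlev0 (k + 1); positivity) ?_).trans ?_
    · rintro X ⟨hX, hXE⟩
      have hlt : τ X < lev (k + 1) := by
        by_contra! hge
        exact hXE.2 ⟨X, ⟨hX, hge⟩, rfl⟩
      obtain ⟨δ, hδ, h⟩ := hosc _ (hlev0 _).le X hX hlt
      exact ⟨δ, hδ, fun r hr hrd Y hY => h r hr hrd Y hY.1⟩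
    · have e1 : (2 * lev (k + 1)) ^ n = 4 ^ n * lev k ^ n := by
        rw [hlevs, ← mul_pow]; congr 1; ring
      rw [e1, ENNReal.ofReal_mul (by positivity), mul_assoc]
      gcongr
      calc ENNReal.ofReal (lev k ^ n) * volume (Prod.fst '' {X | X ∈ K ∧ X.1 ∈ S k})
          ≤ ENNReal.ofReal (lev k ^ n) * volume (S k) := by
            gcongr
            rintro _ ⟨X, ⟨-, hX⟩, rfl⟩
            exact hX
        _ = ∫⁻ x in S k, ENNReal.ofReal (lev k ^ n) := (setLIntegral_const _ _).symm
        _ ≤ _ := by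
            refine setLIntegral_mono' (hSm k) fun x hx => ?_
            obtain ⟨X, ⟨hX, hX2⟩, rfl⟩ := hx.1
            rw [ENNReal.ofReal_pow (hlev0 k).le]
            gcongr
            exact (ENNReal.ofReal_le_ofReal hX2).trans (hinfo X hX).2.2
  calc volume (ball (0 : En n) m) ≤ volume (G '' K) := measure_mono hsurj
    _ ≤ volume (G '' {X | X ∈ K ∧ X.1 ∉ E η} ∪ ⋃ k, G '' {X | X ∈ K ∧ X.1 ∈ S k}) := by
        refine measure_mono ?_
        rw [← image_iUnion, ← image_union]
        exact image_mono hKcov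
    _ ≤ volume (G '' {X | X ∈ K ∧ X.1 ∉ E η}) +
          ∑' k, volume (G '' {X | X ∈ K ∧ X.1 ∈ S k}) :=
        (measure_union_le _ _).trans (by gcongr; exact measure_iUnion_le _)
    _ ≤ ENNReal.ofReal ((2 * η) ^ n) * volume (closedBall y R) +
          ∑' k, ENNReal.ofReal (4 ^ n) * ∫⁻ x in S k, H x ^ n :=
        add_le_add hb0 (ENNReal.tsum_le_tsum hbk)
    _ = ENNReal.ofReal ((2 * η) ^ n) * volume (closedBall y R) +
          ENNReal.ofReal (4 ^ n) * ∫⁻ x in ⋃ k, S k, H x ^ n := by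
        rw [ENNReal.tsum_mul_left, lintegral_iUnion hSm hSd]
    _ ≤ _ := by
        gcongr

/-- Abstract Alexandrov, Bakelman, Pucci type estimate. -/
lemma abp (hn : 0 < n) (v τ : En n × ℝ → ℝ) (G : En n × ℝ → En n)
    (Hm : En n × ℝ → En n →L[ℝ] En n) (H : En n → ℝ≥0∞) (y x0 : En n) (R t0 t1 M : ℝ)
    (hR : 0 < R) (ht : t0 ≤ t1) (hM : 0 < M) (hx0 : x0 ∈ closedBall y R)
    (hv : ContinuousOn v (closedBall y R ×ˢ Icc t0 t1))
    (hG : ContinuousOn G (closedBall y R ×ˢ Icc t0 t1))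
    (hτ : ContinuousOn τ (closedBall y R ×ˢ Icc t0 t1))
    (hbd0 : ∀ x ∈ closedBall y R, v (x, t0) ≤ 0)
    (hbd1 : ∀ x, dist x y = R → ∀ t ∈ Icc t0 t1, v (x, t) ≤ 0)
    (hM0 : M ≤ v (x0, t1))
    (hgrad : ∀ x ∈ ball y R, ∀ t ∈ Icc t0 t1,
      HasGradientAt (fun z => v (z, t)) (G (x, t)) x)
    (hhess : ∀ x ∈ ball y R, ∀ t ∈ Icc t0 t1,
      HasFDerivAt (fun z => G (z, t)) (Hm (x, t)) x)
    (hB : ∀ x ∈ ball y R, ∀ t ∈ Icc t0 t1, t0 < t → 0 < v (x, t) →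
      ‖G (x, t)‖ ≤ M / (4 * R) → (∀ h, ⟪Hm (x, t) h, h⟫ ≤ 0) →
      (∀ s ∈ Icc t0 t1, v (x, s) ≤ v (x, t)) →
      (∀ h, -⟪Hm (x, t) h, h⟫ ≤ τ (x, t) * ‖h‖ ^ 2) ∧ ENNReal.ofReal (τ (x, t)) ≤ H x) :
    volume (ball (0 : En n) (M / (4 * R))) ≤
        ENNReal.ofReal (4 ^ n) * ∫⁻ x in ball y R, H x ^ n := by
  have key := abp_eta v τ G Hm H y x0 R t0 t1 M hR ht hM hx0 hv hG hτ hbd0 hbd1 hM0 hgrad hhess hB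
  have hlim : Filter.Tendsto (fun η : ℝ => ENNReal.ofReal ((2 * η) ^ n) *
      volume (closedBall y R) + ENNReal.ofReal (4 ^ n) * ∫⁻ x in ball y R, H x ^ n)
      (nhdsWithin 0 (Ioi 0)) (nhds (0 * volume (closedBall y R) +
        ENNReal.ofReal (4 ^ n) * ∫⁻ x in ball y R, H x ^ n)) := by
    refine Filter.Tendsto.add ?_ tendsto_const_nhds
    refine ENNReal.Tendsto.mul_const ?_ (Or.inr measure_closedBall_lt_top.ne)
    have hcont : Continuous fun η : ℝ => ENNReal.ofReal ((2 * η) ^ n) :=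
      ENNReal.continuous_ofReal.comp (by fun_prop)
    have := (hcont.tendsto 0).mono_left (nhdsWithin_le_nhds (s := Ioi (0 : ℝ)))
    simpa [hn.ne'] using this
  rw [zero_mul, zero_add] at hlim
  refine ge_of_tendsto hlim ?_
  filter_upwards [self_mem_nhdsWithin] with η hη
  exact key η hη


/-- Spatial gradient. -/
def Gu (u : En n × ℝ → ℝ) (X : En n × ℝ) : En n := WithLp.toLp 2 (fun i => Dx u i X)

/-- Spatial Hessian. -/
def Hu (u : En n × ℝ → ℝ) (X : En n × ℝ) : En n →L[ℝ] En n :=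
  fderiv ℝ (fun z => Gu u (z, X.2)) X.1

lemma Gu_hasGradientAt {u : En n × ℝ → ℝ} {O : Set (En n × ℝ)} (hu : IsC21 u O)
    {X : En n × ℝ} (hX : X ∈ O) : HasGradientAt (fun z => u (z, X.2)) (Gu u X) X.1 := by
  rw [hasGradientAt_iff_hasFDerivAt]
  have h := (hu.diff_x X hX).hasFDerivAt
  refine h.congr_fderiv (Eq.symm (ContinuousLinearMap.ext fun h => ?_))
  rw [InnerProductSpace.toDual_apply_apply]
  conv_rhs => rw [← (EuclideanSpace.basisFun (Fin n) ℝ).sum_repr h]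
  rw [map_sum]
  simp only [PiLp.inner_apply, Gu]
  refine Finset.sum_congr rfl fun i _ => ?_
  simp [Dx]

lemma Hu_hasFDerivAt {u : En n × ℝ → ℝ} {O : Set (En n × ℝ)} (hu : IsC21 u O)
    {X : En n × ℝ} (hX : X ∈ O) : HasFDerivAt (fun z => Gu u (z, X.2)) (Hu u X) X.1 := by
  refine DifferentiableAt.hasFDerivAt ?_
  rw [differentiableAt_euclidean]
  intro j
  exact hu.diff_xx j X hX

lemma Hu_entry {u : En n × ℝ → ℝ} {O : Set (En n × ℝ)} (hu : IsC21 u O)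
    {X : En n × ℝ} (hX : X ∈ O) (i j : Fin n) :
    (Hu u X (EuclideanSpace.single i 1)) j = Dxx u i j X := by
  have h := (Hu_hasFDerivAt hu hX)
  have h2 := (HasFDerivAt.comp X.1 (EuclideanSpace.proj (𝕜 := ℝ) j).hasFDerivAt h).fderiv
  unfold Dxx
  rw [Dx]
  change fderiv ℝ (fun x => Gu u (x, X.2) j) X.1 = _ at h2
  change _ = fderiv ℝ (fun x => Gu u (x, X.2) j) X.1 _
  rw [h2]
  rfl

lemma Dxx_symm {u : En n × ℝ → ℝ} {O : Set (En n × ℝ)} (hO : IsOpen O) (hu : IsC21 u O)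
    {X : En n × ℝ} (hX : X ∈ O) (i j : Fin n) : Dxx u i j X = Dxx u j i X := by
  have hev : ∀ᶠ z in nhds X.1, (z, X.2) ∈ O := by
    have hc : Continuous fun z : En n => (z, X.2) := by fun_prop
    exact hc.continuousAt.eventually (hO.mem_nhds hX)
  have h1 : ∀ᶠ z in nhds X.1, HasFDerivAt (fun z => u (z, X.2))
      (InnerProductSpace.toDual ℝ (En n) (Gu u (z, X.2))) z := by
    filter_upwards [hev] with z hz using (Gu_hasGradientAt hu hz).hasFDerivAt
  have h2 := ((InnerProductSpace.toDual ℝ (En n)).toContinuousLinearEquiv.toContinuousLinearMap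
    |>.hasFDerivAt).comp X.1 (Hu_hasFDerivAt hu hX)
  have h3 := second_derivative_symmetric_of_eventually_of_real h1 h2
    (EuclideanSpace.single i 1) (EuclideanSpace.single j 1)
  simp [EuclideanSpace.inner_single_right] at h3
  rw [Hu_entry hu hX, Hu_entry hu hX] at h3
  exact h3

lemma Gu_continuousOn {u : En n × ℝ → ℝ} {O : Set (En n × ℝ)} (hu : IsC21 u O) :
    ContinuousOn (Gu u) O := by
  unfold Gu
  refine (PiLp.continuous_toLp 2 _).comp_continuousOn ?_
  exact continuousOn_pi.2 fun i => hu.cont_x i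

/-- The class of uniformly elliptic matrices. -/
def EllMat (ν : ℝ) (A : Matrix (Fin n) (Fin n) ℝ) : Prop :=
  (∀ ξ : Fin n → ℝ, ν⁻¹ * (∑ i, ξ i ^ 2) ≤ ∑ i, ∑ j, A i j * ξ i * ξ j) ∧
    (∑ i, ∑ j, (A i j) ^ 2) ≤ ν ^ 2

lemma EllMat.abs_le {ν : ℝ} (hν : 1 ≤ ν) {A : Matrix (Fin n) (Fin n) ℝ} (hA : EllMat ν A)
    (i j : Fin n) : |A i j| ≤ ν := by
  refine abs_le_of_sq_le_sq ?_ (by linarith)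
  refine le_trans ?_ hA.2
  refine le_trans ?_ (Finset.single_le_sum (f := fun i => ∑ j, (A i j) ^ 2)
    (fun i _ => Finset.sum_nonneg fun j _ => sq_nonneg _) (Finset.mem_univ i))
  exact Finset.single_le_sum (f := fun j => (A i j) ^ 2) (fun j _ => sq_nonneg _)
    (Finset.mem_univ j)

/-- The differential inequality with the essential supremum of the drift, valid up to the
closed time interval, up to an arbitrarily small error. -/
lemma eq_closure {ν : ℝ} (hν : 1 ≤ ν) {r T0 T1 : ℝ} (hT : T0 < T1)
    {u : En n × ℝ → ℝ} {a : En n × ℝ → Matrix (Fin n) (Fin n) ℝ} {b : En n × ℝ → En n}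
    {O : Set (En n × ℝ)} (hO : IsOpen O) (hQO : ball (0 : En n) r ×ˢ Icc T0 T1 ⊆ O)
    (hu : IsC21 u O) (ha : UnifParabolic ν a (box (0 : En n) r T0 T1))
    (heq : ∀ X ∈ box (0 : En n) r T0 T1, -Dt u X + Lop a b u X ≤ 0)
    {x : En n} (hx : x ∈ ball (0 : En n) r) {t : ℝ} (ht : t ∈ Icc T0 T1)
    (hβ : essSup (fun t => (‖b (x, t)‖₊ : ℝ≥0∞))
      (volume.restrict {t | (x, t) ∈ box (0 : En n) r T0 T1}) ≠ ⊤) {ε : ℝ} (hε : 0 < ε) :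
    ∃ A : Matrix (Fin n) (Fin n) ℝ, EllMat ν A ∧
      ∑ i, ∑ j, A i j * Dxx u i j (x, t) ≤ Dt u (x, t) +
        (essSup (fun t => (‖b (x, t)‖₊ : ℝ≥0∞))
          (volume.restrict {t | (x, t) ∈ box (0 : En n) r T0 T1})).toReal * ‖Gu u (x, t)‖ + ε := by
  set β := essSup (fun t => (‖b (x, t)‖₊ : ℝ≥0∞))
      (volume.restrict {t | (x, t) ∈ box (0 : En n) r T0 T1}) with hβdef
  have hset : {t | (x, t) ∈ box (0 : En n) r T0 T1} = Ioo T0 T1 := by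
    ext s; simp [box, mem_ball_zero_iff.1 hx]
  have hae : ∀ᵐ s ∂(volume : Measure ℝ), s ∈ Ioo T0 T1 → (‖b (x, s)‖₊ : ℝ≥0∞) ≤ β := by
    rw [← ae_restrict_iff' measurableSet_Ioo, ← hset]
    exact ENNReal.ae_le_essSup _
  have hX : (x, t) ∈ O := hQO ⟨hx, ht⟩
  have hcs : Continuous fun s : ℝ => (x, s) := by fun_prop
  have hcomp : ∀ {F : Type} [TopologicalSpace F] (f : En n × ℝ → F), ContinuousOn f O →
      ContinuousAt (fun s => f (x, s)) t := by
    intro F _ f hf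
    exact ContinuousAt.comp (f := fun s : ℝ => (x, s)) (hf.continuousAt (hO.mem_nhds hX))
      hcs.continuousAt
  have hF : ContinuousAt (fun s => ν * (∑ i, ∑ j, |Dxx u i j (x, s) - Dxx u i j (x, t)|) +
      (Dt u (x, s) - Dt u (x, t)) +
      β.toReal * (‖Gu u (x, s)‖ - ‖Gu u (x, t)‖)) t := by
    refine ((continuousAt_const.mul ?_).add
      ((hcomp _ hu.cont_t).sub continuousAt_const)).add (continuousAt_const.mul
        ((hcomp _ (Gu_continuousOn hu)).norm.sub continuousAt_const))
    refine tendsto_finsetSum _ fun i _ => tendsto_finsetSum _ fun j _ => ?_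
    exact ((hcomp _ (hu.cont_xx i j)).sub continuousAt_const).abs
  have hev := hF.eventually_lt (continuousAt_const (y := ε)) (by simpa using hε)
  obtain ⟨U, hUs, hUo, htU⟩ := _root_.eventually_nhds_iff.1 hev
  have htc : t ∈ closure (Ioo T0 T1) := by rwa [closure_Ioo hT.ne]
  have hne : (U ∩ Ioo T0 T1).Nonempty := mem_closure_iff.1 htc U hUo htU
  obtain ⟨s, hs1, hs2⟩ := (Measure.dense_of_ae hae).inter_open_nonempty _
    (hUo.inter isOpen_Ioo) hne
  have hsI := hs1.2
  have hbs : ‖b (x, s)‖ ≤ β.toReal := by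
    have := ENNReal.toReal_mono hβ (hs2 hsI)
    simpa using this
  have hsQ : (x, s) ∈ box (0 : En n) r T0 T1 := ⟨hx, hsI⟩
  have hA : EllMat ν (a (x, s)) := ha _ hsQ
  refine ⟨a (x, s), hA, ?_⟩
  have h1 := hUs s hs1.1
  have h2 := heq _ hsQ
  have h3 : ∑ i, b (x, s) i * Dx u i (x, s) = ⟪b (x, s), Gu u (x, s)⟫ := by
    simp [PiLp.inner_apply, Gu, mul_comm]
  unfold Lop at h2
  rw [h3] at h2
  have h4 : -(‖b (x, s)‖ * ‖Gu u (x, s)‖) ≤ ⟪b (x, s), Gu u (x, s)⟫ :=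
    (abs_le.1 (abs_real_inner_le_norm _ _)).1
  have h5 : ‖b (x, s)‖ * ‖Gu u (x, s)‖ ≤ β.toReal * ‖Gu u (x, s)‖ := by gcongr
  have h6 : ∑ i, ∑ j, a (x, s) i j * Dxx u i j (x, t) ≤
      ∑ i, ∑ j, a (x, s) i j * Dxx u i j (x, s) +
        ν * (∑ i, ∑ j, |Dxx u i j (x, s) - Dxx u i j (x, t)|) := by
    rw [Finset.mul_sum, ← Finset.sum_add_distrib]
    refine Finset.sum_le_sum fun i _ => ?_
    rw [Finset.mul_sum, ← Finset.sum_add_distrib]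
    refine Finset.sum_le_sum fun j _ => ?_
    have h7 := hA.abs_le hν i j
    have h8 : |a (x, s) i j * (Dxx u i j (x, s) - Dxx u i j (x, t))| ≤
        ν * |Dxx u i j (x, s) - Dxx u i j (x, t)| := by
      rw [abs_mul]; gcongr
    have h9 := (abs_le.1 h8).1
    linarith
  linarith


/-- Exponential part of the barrier. -/
def barE (c A q Λ t0 : ℝ) (y : En n) (X : En n × ℝ) : ℝ :=
  c * Real.exp (Λ + (4 * A - q) * (X.2 - t0) - A * ‖X.1 - y‖ ^ 2)

/-- The barrier. -/
def bar (c A q Λ t0 : ℝ) (y : En n) (X : En n × ℝ) : ℝ :=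
  barE c A q Λ t0 y X - c * Real.exp (-q * (X.2 - t0))

/-- Gradient of the barrier. -/
def barG (c A q Λ t0 : ℝ) (y : En n) (X : En n × ℝ) : En n :=
  (-(2 * A) * barE c A q Λ t0 y X) • (X.1 - y)

/-- Hessian of the barrier. -/
def barH (c A q Λ t0 : ℝ) (y : En n) (X : En n × ℝ) : En n →L[ℝ] En n :=
  (-(2 * A) * barE c A q Λ t0 y X) • ContinuousLinearMap.id ℝ (En n) +
    (4 * A ^ 2 * barE c A q Λ t0 y X) • (innerSL ℝ (X.1 - y)).smulRight (X.1 - y)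

lemma barE_hasFDerivAt (c A q Λ t0 : ℝ) (y : En n) (X : En n × ℝ) :
    HasFDerivAt (fun z => barE c A q Λ t0 y (z, X.2))
      ((-(2 * A) * barE c A q Λ t0 y X) • innerSL ℝ (X.1 - y)) X.1 := by
  have h1 : HasFDerivAt (fun z : En n => ‖z - y‖ ^ 2) (2 • innerSL ℝ (X.1 - y)) X.1 := by
    have := ((hasStrictFDerivAt_norm_sq (X.1 - y)).hasFDerivAt).comp X.1
      ((hasFDerivAt_id X.1).sub_const y)
    exact this.congr_fderiv (ContinuousLinearMap.ext fun h => by simp)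
  have h2 := (((h1.const_mul A).const_sub (Λ + (4 * A - q) * (X.2 - t0))).exp).const_mul c
  refine h2.congr_fderiv ?_
  ext h
  simp [barE]
  ring

lemma bar_hasGradientAt (c A q Λ t0 : ℝ) (y : En n) (X : En n × ℝ) :
    HasGradientAt (fun z => bar c A q Λ t0 y (z, X.2)) (barG c A q Λ t0 y X) X.1 := by
  rw [hasGradientAt_iff_hasFDerivAt]
  refine HasFDerivAt.congr_fderiv ((barE_hasFDerivAt c A q Λ t0 y X).sub_const
    (c * Real.exp (-q * (X.2 - t0)))) ?_
  refine ContinuousLinearMap.ext fun h => ?_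
  rw [InnerProductSpace.toDual_apply_apply, barG, inner_smul_left]
  simp [inner_sub_left]

lemma bar_hasHess (c A q Λ t0 : ℝ) (y : En n) (X : En n × ℝ) :
    HasFDerivAt (fun z => barG c A q Λ t0 y (z, X.2)) (barH c A q Λ t0 y X) X.1 := by
  have h1 := ((barE_hasFDerivAt c A q Λ t0 y X).const_mul (-(2 * A))).smul
    ((hasFDerivAt_id X.1).sub_const y)
  refine h1.congr_fderiv ?_
  refine ContinuousLinearMap.ext fun h => ?_
  simp only [barH, _root_.add_apply, _root_.smul_apply,
    ContinuousLinearMap.smulRight_apply, smul_smul, id, ContinuousLinearMap.coe_id',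
    smul_eq_mul]
  congr 2
  ring

lemma bar_hasDt (c A q Λ t0 : ℝ) (y : En n) (X : En n × ℝ) :
    HasDerivAt (fun t => bar c A q Λ t0 y (X.1, t))
      ((4 * A - q) * barE c A q Λ t0 y X + q * (c * Real.exp (-q * (X.2 - t0)))) X.2 := by
  have h0 : HasDerivAt (fun t : ℝ => t - t0) 1 X.2 := (hasDerivAt_id X.2).sub_const t0
  have h1 := (((h0.const_mul (4 * A - q)).const_add Λ).sub_const (A * ‖X.1 - y‖ ^ 2)).exp.const_mul c
  have h2 := ((h0.const_mul (-q)).exp).const_mul c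
  refine (h1.sub h2).congr_deriv ?_
  simp only [barE]
  ring

lemma barH_entry (c A q Λ t0 : ℝ) (y : En n) (X : En n × ℝ) (i j : Fin n) :
    (barH c A q Λ t0 y X (EuclideanSpace.single i 1)) j =
      barE c A q Λ t0 y X * (4 * A ^ 2 * ((X.1 - y) i * (X.1 - y) j) -
        2 * A * (if i = j then 1 else 0)) := by
  simp [barH, EuclideanSpace.inner_single_right, eq_comm (a := j)]
  split_ifs <;> ring

lemma barE_continuous (c A q Λ t0 : ℝ) (y : En n) : Continuous (barE c A q Λ t0 y) := by
  unfold barE; fun_prop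

lemma bar_continuous (c A q Λ t0 : ℝ) (y : En n) : Continuous (bar c A q Λ t0 y) := by
  have := barE_continuous c A q Λ t0 y
  unfold bar; fun_prop

lemma barG_continuous (c A q Λ t0 : ℝ) (y : En n) : Continuous (barG c A q Λ t0 y) := by
  have := barE_continuous c A q Λ t0 y
  unfold barG; fun_prop

/-- The barrier is a subsolution where it is positive. -/
lemma bar_sub {ν : ℝ} (hν : 1 ≤ ν) {ρ c Λ q t0 : ℝ} (hρ : 0 < ρ) (hc : 0 < c)
    (hΛ : Λ = ν * (2 + n * ν)) (hq : q * (1 - Real.exp (-(Λ / 2))) = Λ * (4 + 2 * n * ν))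
    (hq0 : 0 < q) (y : En n) {X : En n × ℝ} (ht : t0 ≤ X.2)
    (hpos : 0 < bar c (Λ / ρ ^ 2) (q / ρ ^ 2) Λ t0 y X)
    {a : Matrix (Fin n) (Fin n) ℝ} (ha : EllMat ν a) :
    (4 * (Λ / ρ ^ 2) - q / ρ ^ 2) * barE c (Λ / ρ ^ 2) (q / ρ ^ 2) Λ t0 y X +
        q / ρ ^ 2 * (c * Real.exp (-(q / ρ ^ 2) * (X.2 - t0))) ≤
      ∑ i, ∑ j, a i j * (barH c (Λ / ρ ^ 2) (q / ρ ^ 2) Λ t0 y X (EuclideanSpace.single i 1)) j := by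
  set A := Λ / ρ ^ 2 with hA
  set q' := q / ρ ^ 2 with hq'
  set E := barE c A q' Λ t0 y X with hE
  set F := c * Real.exp (-q' * (X.2 - t0)) with hF
  have hΛ0 : 0 < Λ := by rw [hΛ]; positivity
  have hA0 : 0 < A := by positivity
  have hq'0 : 0 < q' := by positivity
  have hE0 : 0 < E := by rw [hE, barE]; positivity
  have hF0 : 0 < F := by positivity
  have hFE : F ≤ E := by
    unfold bar at hpos; linarith
  set w := X.1 - y with hw
  have hsum : ∑ i, ∑ j, a i j * (barH c A q' Λ t0 y X (EuclideanSpace.single i 1)) j =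
      E * (4 * A ^ 2 * (∑ i, ∑ j, a i j * w i * w j) - 2 * A * ∑ i, a i i) := by
    simp only [barH_entry]
    rw [← hE, ← hw, mul_sub, ← mul_assoc E (4 * A ^ 2), ← mul_assoc E (2 * A), Finset.mul_sum,
      Finset.mul_sum, ← Finset.sum_sub_distrib]
    refine Finset.sum_congr rfl fun i _ => ?_
    rw [Finset.mul_sum]
    have : E * (2 * A) * a i i = ∑ j, E * (2 * A) * (a i j * (if i = j then 1 else 0)) := by
      simp
    rw [this, ← Finset.sum_sub_distrib]
    refine Finset.sum_congr rfl fun j _ => ?_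
    ring
  rw [hsum]
  have h1 : ν⁻¹ * ‖w‖ ^ 2 ≤ ∑ i, ∑ j, a i j * w i * w j := by
    have := ha.1 (fun i => w i)
    rwa [EuclideanSpace.real_norm_sq_eq]
  have h2 : ∑ i, a i i ≤ n * ν := by
    calc ∑ i, a i i ≤ ∑ i : Fin n, ν :=
          Finset.sum_le_sum fun i _ => (le_abs_self _).trans (ha.abs_le hν i i)
      _ = n * ν := by simp
  have hν0 : 0 < ν := by linarith
  have key : 4 * A + 2 * A * (n * ν) ≤ 4 * A ^ 2 * (ν⁻¹ * ‖w‖ ^ 2) + q' * (1 - F / E) := by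
    by_cases hcase : ρ ^ 2 / 2 ≤ ‖w‖ ^ 2
    · have e1 : 4 * A ^ 2 * (ν⁻¹ * (ρ ^ 2 / 2)) = 4 * A + 2 * A * (n * ν) := by
        have : A * ρ ^ 2 = ν * (2 + n * ν) := by rw [hA, ← hΛ]; field_simp
        calc 4 * A ^ 2 * (ν⁻¹ * (ρ ^ 2 / 2)) = 2 * A * ν⁻¹ * (A * ρ ^ 2) := by ring
          _ = _ := by rw [this]; field_simp; ring
      have e2 : 4 * A ^ 2 * (ν⁻¹ * (ρ ^ 2 / 2)) ≤ 4 * A ^ 2 * (ν⁻¹ * ‖w‖ ^ 2) := by gcongr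
      have e3 : 0 ≤ q' * (1 - F / E) := by
        refine mul_nonneg hq'0.le ?_
        rw [sub_nonneg, div_le_one hE0]; exact hFE
      linarith
    · push Not at hcase
      have e1 : F ≤ E * Real.exp (-(Λ / 2)) := by
        rw [hF, hE, barE, mul_assoc, ← Real.exp_add]
        gcongr
        have : A * ‖w‖ ^ 2 ≤ Λ / 2 := by
          calc A * ‖w‖ ^ 2 ≤ A * (ρ ^ 2 / 2) := by gcongr
            _ = Λ / 2 := by rw [hA]; field_simp
        have h3 : 0 ≤ A * (X.2 - t0) := mul_nonneg hA0.le (by linarith)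
        rw [← hw]
        nlinarith
      have e2 : F / E ≤ Real.exp (-(Λ / 2)) := by
        rw [div_le_iff₀ hE0]; linarith
      have e3 : q' * (1 - Real.exp (-(Λ / 2))) = 4 * A + 2 * A * (n * ν) := by
        calc q' * (1 - Real.exp (-(Λ / 2))) = (q * (1 - Real.exp (-(Λ / 2)))) / ρ ^ 2 := by
              rw [hq']; ring
          _ = _ := by rw [hq, hA]; ring
      have e4 : q' * (1 - Real.exp (-(Λ / 2))) ≤ q' * (1 - F / E) := by gcongr
      have e5 : 0 ≤ 4 * A ^ 2 * (ν⁻¹ * ‖w‖ ^ 2) := by positivity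
      linarith
  have k2 : E * (4 * A + 2 * A * (n * ν)) ≤
      E * (4 * A ^ 2 * (ν⁻¹ * ‖w‖ ^ 2) + q' * (1 - F / E)) := by gcongr
  have k3 : E * (q' * (1 - F / E)) = q' * E - q' * F := by field_simp
  have k4 : E * (4 * A ^ 2 * (ν⁻¹ * ‖w‖ ^ 2)) ≤
      E * (4 * A ^ 2 * (∑ i, ∑ j, a i j * w i * w j)) := by gcongr
  have k5 : E * (2 * A * ∑ i, a i i) ≤ E * (2 * A * (n * ν)) := by gcongr
  nlinarith


/-- A one-sided maximum in time has nonnegative time derivative. -/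
lemma deriv_nonneg_of_max {f : ℝ → ℝ} {f' t0 t : ℝ} (ht : t0 < t) (hf : HasDerivAt f f' t)
    (hmax : ∀ s ∈ Icc t0 t, f s ≤ f t) : 0 ≤ f' := by
  have h1 : IsLocalMaxOn f (Icc t0 t) t := by
    filter_upwards [self_mem_nhdsWithin] with s hs using hmax s hs
  have h2 : t0 - t ∈ posTangentConeAt (Icc t0 t) t := by
    refine mem_posTangentConeAt_of_segment_subset ?_
    rw [add_sub_cancel, segment_symm, segment_eq_Icc ht.le]
  have h3 := h1.hasFDerivWithinAt_nonpos hf.hasFDerivAt.hasFDerivWithinAt h2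
  simp at h3
  nlinarith

lemma barE_pos {c A q Λ t0 : ℝ} (hc : 0 < c) (y : En n) (X : En n × ℝ) :
    0 < barE c A q Λ t0 y X := by
  unfold barE; positivity

/-- Sign of the barrier. -/
lemma bar_nonpos {c A q Λ t0 : ℝ} (hc : 0 < c) (y : En n) (X : En n × ℝ)
    (h : Λ + 4 * A * (X.2 - t0) ≤ A * ‖X.1 - y‖ ^ 2) : bar c A q Λ t0 y X ≤ 0 := by
  unfold bar barE
  rw [sub_nonpos]
  gcongr
  nlinarith

lemma quad_form (Hm : En n →L[ℝ] En n) (h : En n) :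
    ⟪Hm h, h⟫ = ∑ i, ∑ j, (Hm (EuclideanSpace.single i 1)) j * h i * h j := by
  have e : h = ∑ i, h i • EuclideanSpace.single i (1 : ℝ) := by
    conv_lhs => rw [← (EuclideanSpace.basisFun (Fin n) ℝ).sum_repr h]
    simp
  have e2 : Hm h = ∑ i, h i • Hm (EuclideanSpace.single i (1 : ℝ)) := by
    conv_lhs => rw [e]
    rw [map_sum]
    simp only [map_smul]
  rw [e2, sum_inner]
  refine Finset.sum_congr rfl fun i _ => ?_
  rw [inner_smul_left, PiLp.inner_apply, Finset.mul_sum]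
  refine Finset.sum_congr rfl fun j _ => ?_
  simp
  ring

/-- The core pointwise estimate at a contact point. -/
lemma touch_bound {ν : ℝ} (hν : 1 ≤ ν) {D B : Matrix (Fin n) (Fin n) ℝ}
    (hD : ∀ i j, D i j = D j i) (hB : ∀ i j, B i j = B j i)
    (hpsd : ∀ h : Fin n → ℝ, 0 ≤ ∑ i, ∑ j, (D i j - B i j) * h i * h j)
    {w K : ℝ}
    (h1 : ∀ ε : ℝ, 0 < ε → ∃ A : Matrix (Fin n) (Fin n) ℝ, EllMat ν A ∧
      ∑ i, ∑ j, A i j * D i j ≤ w + K + ε)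
    (h2 : ∀ A : Matrix (Fin n) (Fin n) ℝ, EllMat ν A → w ≤ ∑ i, ∑ j, A i j * B i j) :
    (∀ h : Fin n → ℝ, ∑ i, ∑ j, (D i j - B i j) * h i * h j ≤
      (∑ i, (D i i - B i i)) * ∑ i, h i ^ 2) ∧ ∑ i, (D i i - B i i) ≤ ν * K := by
  have hp := psd_bounds (D - B) (fun i j => by simp [hD i j, hB i j])
    (fun h => by simpa using hpsd h)
  refine ⟨fun h => by simpa using hp.1 h, ?_⟩
  have hν0 : 0 < ν := by linarith
  have key : ν⁻¹ * ∑ i, (D i i - B i i) ≤ K := by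
    refine le_of_forall_pos_le_add fun ε hε => ?_
    obtain ⟨A, hA, hA1⟩ := h1 ε hε
    have h3 := hp.2 A ν⁻¹ hA.1
    have h4 := h2 A hA
    simp only [Matrix.sub_apply, mul_sub, Finset.sum_sub_distrib] at h3 ⊢
    linarith
  rwa [inv_mul_le_iff₀ hν0] at key

set_option maxHeartbeats 1000000 in
lemma one_step (hn : 0 < n) {ν : ℝ} (hν : 1 ≤ ν) {Λ q c0 C s₁ : ℝ}
    (hΛ : Λ = ν * (2 + n * ν)) (hq : q * (1 - Real.exp (-(Λ / 2))) = Λ * (4 + 2 * n * ν))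
    (hq0 : 0 < q) (hc0 : c0 = Real.exp (-q) * (1 - Real.exp (-Λ)))
    (hC : C = 6 * Λ * Real.exp (4 * Λ) + c0 / 24)
    (hs₁ : s₁ = 1 / 2 * (volume (ball (0 : En n) 1)).toReal * (c0 / (96 * ν * C)) ^ n)
    {r T0 T1 ℓ : ℝ} (hr : 0 < r) (hℓ : 0 < ℓ) (hT : T0 < T1)
    {u : En n × ℝ → ℝ} {a : En n × ℝ → Matrix (Fin n) (Fin n) ℝ} {b : En n × ℝ → En n}
    {O : Set (En n × ℝ)} (hO : IsOpen O) (hQO : closure (box (0 : En n) r T0 T1) ⊆ O)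
    (hu : IsC21 u O) (ha : UnifParabolic ν a (box (0 : En n) r T0 T1))
    (hb : LxnLtinfPow b (box (0 : En n) r T0 T1) ≤ ENNReal.ofReal s₁)
    (heq : ∀ X ∈ box (0 : En n) r T0 T1, -Dt u X + Lop a b u X ≤ 0)
    (hpos : ∀ X ∈ box (0 : En n) r T0 T1, 0 < u X)
    {y : En n} {ρ t0 : ℝ} (hρ : 0 < ρ) (hyr : ‖y‖ + 3 * ρ ≤ r) (ht0 : T0 ≤ t0)
    (ht1 : t0 + ρ ^ 2 ≤ T1) (hlow : ∀ x ∈ ball y ρ, ℓ ≤ u (x, t0)) :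
    ∀ x ∈ closedBall y (2 * ρ), c0 / 2 * ℓ ≤ u (x, t0 + ρ ^ 2) := by
  have hν0 : 0 < ν := by linarith
  have hΛ0 : 0 < Λ := by rw [hΛ]; positivity
  have hc0pos : 0 < c0 := by
    rw [hc0]
    refine mul_pos (Real.exp_pos _) ?_
    rw [sub_pos, Real.exp_lt_one_iff]; linarith
  have hC0 : 0 < C := by rw [hC]; positivity
  have hclos : closure (box (0 : En n) r T0 T1) = closedBall (0 : En n) r ×ˢ Icc T0 T1 := by
    rw [box, closure_prod_eq, closure_ball _ hr.ne', closure_Ioo hT.ne]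
  have hsub : closedBall y (3 * ρ) ×ˢ Icc t0 (t0 + ρ ^ 2) ⊆ closure (box (0 : En n) r T0 T1) := by
    rw [hclos]
    refine Set.prod_mono ?_ (Icc_subset_Icc ht0 ht1)
    refine closedBall_subset_closedBall' ?_
    rw [dist_zero_right]; linarith
  have hsubO := hsub.trans hQO
  have hQO2 : ball (0 : En n) r ×ˢ Icc T0 T1 ⊆ O := by
    refine Subset.trans ?_ hQO
    rw [hclos]
    exact Set.prod_mono ball_subset_closedBall Subset.rfl
  have hunn : ∀ X ∈ closure (box (0 : En n) r T0 T1), 0 ≤ u X := by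
    have h := (hu.cont.mono hQO)
    intro X hX
    have h2 := h.image_closure (mem_image_of_mem u hX)
    have h3 : closure (u '' box (0 : En n) r T0 T1) ⊆ Ici 0 := by
      refine closure_minimal ?_ isClosed_Ici
      rintro _ ⟨Y, hY, rfl⟩
      exact (hpos Y hY).le
    exact h3 h2
  set A := Λ / ρ ^ 2 with hA
  set q' := q / ρ ^ 2 with hq'
  set c := ℓ * Real.exp (-Λ) with hc
  have hA0 : 0 < A := by positivity
  have hq'0 : 0 < q' := by positivity
  have hcpos : 0 < c := by positivity
  have hAρ : A * ρ ^ 2 = Λ := by rw [hA]; field_simp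
  have hqρ : q' * ρ ^ 2 = q := by rw [hq']; field_simp
  intro x0 hx0
  by_contra hcon
  push Not at hcon
  set ψ := bar c A q' Λ t0 y with hψ
  set M := c0 / 2 * ℓ with hM
  have hMpos : 0 < M := by positivity
  have hR : 0 < 3 * ρ := by positivity
  have ht01 : t0 ≤ t0 + ρ ^ 2 := by nlinarith [sq_nonneg ρ]
  have hMR : M / (4 * (3 * ρ)) = c0 / 24 * (ℓ / ρ) := by rw [hM]; field_simp; ring
  set K := C * (ℓ / ρ) with hK
  have hK0 : 0 < K := by positivity
  set β : En n → ℝ≥0∞ := fun x => essSup (fun t => (‖b (x, t)‖₊ : ℝ≥0∞))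
      (volume.restrict {t | (x, t) ∈ box (0 : En n) r T0 T1}) with hβ
  -- bounds for the barrier
  have hEle : ∀ x ∈ closedBall y (3 * ρ), ∀ t ∈ Icc t0 (t0 + ρ ^ 2),
      ‖barG c A q' Λ t0 y (x, t)‖ ≤ 6 * Λ * Real.exp (4 * Λ) * (ℓ / ρ) := by
    intro x hx t ht
    have hxn : ‖x - y‖ ≤ 3 * ρ := by simpa [dist_eq_norm] using hx
    have hE1 : barE c A q' Λ t0 y (x, t) ≤ ℓ * Real.exp (4 * Λ) := by
      rw [barE, hc, mul_assoc, ← Real.exp_add]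
      gcongr
      have e1 : A * (t - t0) ≤ Λ := by
        rw [← hAρ]; gcongr; linarith [ht.2]
      have e2 : 0 ≤ q' * (t - t0) := mul_nonneg hq'0.le (by linarith [ht.1])
      have e3 : 0 ≤ A * ‖x - y‖ ^ 2 := by positivity
      simp only [sub_mul]
      linarith
    have hE0 := barE_pos (A := A) (q := q') (Λ := Λ) (t0 := t0) hcpos y (x, t)
    rw [barG, norm_smul, Real.norm_eq_abs, neg_mul, abs_neg, abs_of_pos (by positivity)]
    calc 2 * A * barE c A q' Λ t0 y (x, t) * ‖x - y‖ ≤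
        2 * A * (ℓ * Real.exp (4 * Λ)) * (3 * ρ) := by gcongr
      _ = 6 * Λ * Real.exp (4 * Λ) * (ℓ / ρ) := by rw [hA]; field_simp; ring
  have habp := abp hn (fun X => ψ X - u X)
    (fun X => ∑ i, (Dxx u i i X - (barH c A q' Λ t0 y X (EuclideanSpace.single i 1)) i))
    (fun X => barG c A q' Λ t0 y X - Gu u X)
    (fun X => barH c A q' Λ t0 y X - Hu u X)
    (fun x => ENNReal.ofReal (ν * K) * β x) y x0 (3 * ρ) t0 (t0 + ρ ^ 2) M hR ht01 hMpos
    (closedBall_subset_closedBall (by linarith) hx0)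
    ((bar_continuous _ _ _ _ _ _).continuousOn.sub (hu.cont.mono hsubO))
    ((barG_continuous _ _ _ _ _ _).continuousOn.sub ((Gu_continuousOn hu).mono hsubO))
    ?_ ?_ ?_ ?_ ?_ ?_ ?_
  · -- conclusion
    have : Nonempty (Fin n) := ⟨⟨0, hn⟩⟩
    have hω0 : 0 < (volume (ball (0 : En n) 1)).toReal :=
      ENNReal.toReal_pos (measure_ball_pos _ _ one_pos).ne' measure_ball_lt_top.ne
    have h1 : ∫⁻ x in ball y (3 * ρ), (ENNReal.ofReal (ν * K) * β x) ^ n ≤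
        ENNReal.ofReal ((ν * K) ^ n * s₁) := by
      calc ∫⁻ x in ball y (3 * ρ), (ENNReal.ofReal (ν * K) * β x) ^ n
          ≤ ∫⁻ x, (ENNReal.ofReal (ν * K) * β x) ^ n := setLIntegral_le_lintegral _ _
        _ = ENNReal.ofReal ((ν * K) ^ n) * ∫⁻ x, β x ^ n := by
            simp only [mul_pow (ENNReal.ofReal (ν * K))]
            rw [lintegral_const_mul', ENNReal.ofReal_pow (by positivity)]
            exact ENNReal.pow_ne_top ENNReal.ofReal_ne_top
        _ ≤ ENNReal.ofReal ((ν * K) ^ n) * ENNReal.ofReal s₁ := by gcongr; exact hb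
        _ = _ := by rw [ENNReal.ofReal_mul (by positivity)]
    have h2 := habp.trans (mul_le_mul_right h1 _)
    rw [← ENNReal.ofReal_mul (by positivity), Measure.addHaar_ball _ _ (by positivity),
      ← ENNReal.ofReal_toReal (measure_ball_lt_top (μ := (volume : Measure (En n)))
        (x := 0) (r := 1)).ne, ← ENNReal.ofReal_mul (by positivity),
      ENNReal.ofReal_le_ofReal_iff (by rw [hs₁]; positivity), finrank_euclideanSpace_fin] at h2
    have h3 : 4 ^ n * ((ν * K) ^ n * s₁) =
        1 / 2 * ((M / (4 * (3 * ρ))) ^ n * (volume (ball (0 : En n) 1)).toReal) := by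
      rw [hs₁, hMR, hK]
      have e : c0 / 24 * (ℓ / ρ) = 4 * (ν * (C * (ℓ / ρ))) * (c0 / (96 * ν * C)) := by
        field_simp; norm_num
      rw [e, mul_pow _ (c0 / (96 * ν * C)), mul_pow 4]
      ring
    have h4 : 0 < (M / (4 * (3 * ρ))) ^ n * (volume (ball (0 : En n) 1)).toReal := by positivity
    rw [h3] at h2
    linarith
  · -- continuity of τ
    refine continuousOn_finsetSum _ fun i _ => ((hu.cont_xx i i).mono hsubO).sub ?_
    have := barE_continuous c A q' Λ t0 y
    simp only [barH_entry]
    fun_prop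
  · -- initial time
    intro x hx
    have hxu : 0 ≤ u (x, t0) := hunn _ (hsub ⟨hx, left_mem_Icc.2 ht01⟩)
    by_cases hxb : x ∈ ball y ρ
    · have h1 := hlow x hxb
      have h2 : ψ (x, t0) ≤ ℓ := by
        rw [hψ, bar]
        have h3 : barE c A q' Λ t0 y (x, t0) ≤ ℓ := by
          rw [barE, hc, mul_assoc, ← Real.exp_add]
          refine mul_le_of_le_one_right hℓ.le (Real.exp_le_one_iff.2 ?_)
          have e3 : 0 ≤ A * ‖x - y‖ ^ 2 := by positivity
          simp only [sub_self, mul_zero]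
          linarith
        have h4 : 0 < c * Real.exp (-q' * ((x, t0).2 - t0)) := by positivity
        linarith
      linarith
    · have h2 : ψ (x, t0) ≤ 0 := by
        refine bar_nonpos hcpos y _ ?_
        simp only [sub_self, mul_zero, add_zero]
        rw [← hAρ]
        have : ρ ≤ ‖x - y‖ := by simpa [dist_eq_norm] using hxb
        gcongr
      linarith
  · -- lateral boundary
    intro x hx t ht
    have hxu : 0 ≤ u (x, t) := hunn _ (hsub ⟨mem_closedBall.2 hx.le, ht⟩)
    have h2 : ψ (x, t) ≤ 0 := by
      refine bar_nonpos hcpos y _ ?_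
      have e0 : ‖x - y‖ = 3 * ρ := by rw [← dist_eq_norm]; exact hx
      have e1 : A * (t - t0) ≤ Λ := by
        rw [← hAρ]; gcongr; linarith [ht.2]
      have e2 : A * (3 * ρ) ^ 2 = 9 * Λ := by rw [← hAρ]; ring
      rw [e0, e2]
      simp only
      linarith
    linarith
  · -- lower bound of the barrier at final time
    have h1 : c0 * ℓ ≤ ψ (x0, t0 + ρ ^ 2) := by
      rw [hψ, bar, barE, hc0]
      have hxn : ‖x0 - y‖ ≤ 2 * ρ := by simpa [dist_eq_norm] using hx0
      have e1 : A * ‖x0 - y‖ ^ 2 ≤ 4 * Λ := by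
        calc A * ‖x0 - y‖ ^ 2 ≤ A * (2 * ρ) ^ 2 := by gcongr
          _ = 4 * Λ := by rw [← hAρ]; ring
      have e2 : Real.exp (Λ - q) ≤
          Real.exp (Λ + (4 * A - q') * ((x0, t0 + ρ ^ 2).2 - t0) - A * ‖x0 - y‖ ^ 2) := by
        refine Real.exp_le_exp.2 ?_
        have e7 : (4 * A - q') * ρ ^ 2 = 4 * Λ - q := by rw [← hAρ, ← hqρ]; ring
        simp only [add_sub_cancel_left, e7]
        linarith
      have e3 : -q' * ((x0, t0 + ρ ^ 2).2 - t0) = -q := by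
        simp only [add_sub_cancel_left]; linarith
      rw [e3]
      have e4 : c * Real.exp (Λ - q) = ℓ * Real.exp (-q) := by
        rw [hc, mul_assoc, ← Real.exp_add]; ring_nf
      have e5 := mul_le_mul_of_nonneg_left e2 hcpos.le
      have e6 : Real.exp (-q) * (1 - Real.exp (-Λ)) * ℓ =
          ℓ * Real.exp (-q) - c * Real.exp (-q) := by rw [hc]; ring
      simp only at e5 ⊢
      linarith
    linarith
  · intro x hx t ht
    have hXO : (x, t) ∈ O := hsubO ⟨ball_subset_closedBall hx, ht⟩
    have h1 := (bar_hasGradientAt c A q' Λ t0 y (x, t)).hasFDerivAt.sub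
      (Gu_hasGradientAt hu hXO).hasFDerivAt
    rw [hasGradientAt_iff_hasFDerivAt, map_sub]
    exact h1
  · intro x hx t ht
    have hXO : (x, t) ∈ O := hsubO ⟨ball_subset_closedBall hx, ht⟩
    exact (bar_hasHess c A q' Λ t0 y (x, t)).sub (Hu_hasFDerivAt hu hXO)
  · -- pointwise estimate
    intro x hx t ht htt hvpos hG hH hmax
    have hXD : (x, t) ∈ closedBall y (3 * ρ) ×ˢ Icc t0 (t0 + ρ ^ 2) :=
      ⟨ball_subset_closedBall hx, ht⟩
    have hXO : (x, t) ∈ O := hsubO hXD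
    have hxr : x ∈ ball (0 : En n) r := by
      refine ball_subset_ball' ?_ hx
      rw [dist_zero_right]; linarith
    have hu0 := hunn _ (hsub hXD)
    have hψpos : 0 < ψ (x, t) := by linarith
    have hGu : ‖Gu u (x, t)‖ ≤ K := by
      have e1 := hEle x (ball_subset_closedBall hx) t ht
      have e2 : ‖Gu u (x, t)‖ ≤ ‖barG c A q' Λ t0 y (x, t)‖ +
          ‖barG c A q' Λ t0 y (x, t) - Gu u (x, t)‖ := by
        have := norm_sub_le (barG c A q' Λ t0 y (x, t))
          (barG c A q' Λ t0 y (x, t) - Gu u (x, t))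
        rwa [_root_.sub_sub_cancel] at this
      rw [hMR] at hG
      calc ‖Gu u (x, t)‖ ≤ 6 * Λ * Real.exp (4 * Λ) * (ℓ / ρ) + c0 / 24 * (ℓ / ρ) := by
            linarith
        _ = K := by rw [hK, hC]; ring
    have hDt : Dt u (x, t) ≤ (4 * A - q') * barE c A q' Λ t0 y (x, t) +
        q' * (c * Real.exp (-q' * ((x, t).2 - t0))) := by
      have e1 := (bar_hasDt c A q' Λ t0 y (x, t)).sub (hu.diff_t _ hXO).hasDerivAt
      have e2 := deriv_nonneg_of_max htt e1 (fun s hs => hmax s ⟨hs.1, hs.2.trans ht.2⟩)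
      unfold Dt
      linarith
    have hquad : ∀ h : En n, -⟪(barH c A q' Λ t0 y (x, t) - Hu u (x, t)) h, h⟫ =
        ∑ i, ∑ j, (Dxx u i j (x, t) -
          (barH c A q' Λ t0 y (x, t) (EuclideanSpace.single i 1)) j) * h i * h j := by
      intro h
      rw [quad_form, ← Finset.sum_neg_distrib]
      refine Finset.sum_congr rfl fun i _ => ?_
      rw [← Finset.sum_neg_distrib]
      refine Finset.sum_congr rfl fun j _ => ?_
      rw [← Hu_entry hu hXO]
      simp
      ring
    have hmain : ∀ K' : ℝ, (∀ ε : ℝ, 0 < ε → ∃ A' : Matrix (Fin n) (Fin n) ℝ, EllMat ν A' ∧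
        ∑ i, ∑ j, A' i j * Dxx u i j (x, t) ≤ Dt u (x, t) + K' + ε) → _ := fun K' hK' =>
      touch_bound hν (D := fun i j => Dxx u i j (x, t))
        (B := fun i j => (barH c A q' Λ t0 y (x, t) (EuclideanSpace.single i 1)) j)
        (fun i j => Dxx_symm hO hu hXO i j)
        (fun i j => by
          simp only [barH_entry]; rw [mul_comm ((((x, t).1 - y) : En n) i)]; simp only [eq_comm])
        (fun h => by
          have e := hH (WithLp.toLp 2 h)
          have e2 := hquad (WithLp.toLp 2 h)
          simp only at e e2 ⊢
          linarith)
        hK' (fun A' hA' => hDt.trans (bar_sub hν hρ hcpos hΛ hq hq0 y htt.le hψpos hA'))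
    have hpsdb := psd_bounds (fun i j => Dxx u i j (x, t) -
        (barH c A q' Λ t0 y (x, t) (EuclideanSpace.single i 1)) j)
        (fun i j => by
          simp only [barH_entry]
          rw [mul_comm ((((x, t).1 - y) : En n) i), Dxx_symm hO hu hXO i j]
          simp only [eq_comm])
        (fun h => by
          have e := hH (WithLp.toLp 2 h)
          have e2 := hquad (WithLp.toLp 2 h)
          simp only at e e2 ⊢
          linarith)
    constructor
    · intro h
      have e := hpsdb.1 (fun i => h i)
      rw [EuclideanSpace.real_norm_sq_eq]
      simp only
      rw [hquad h]
      exact e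
    · by_cases hβt : β x = ⊤
      · simp only [hβt]
        rw [ENNReal.mul_top (by simpa using by positivity)]
        exact le_top
      · have e := (hmain ((β x).toReal * ‖Gu u (x, t)‖) (fun ε hε =>
          eq_closure hν hT hO hQO2 hu ha heq hxr ⟨ht0.trans ht.1, ht.2.trans ht1⟩ hβt hε)).2
        have e2 : ν * ((β x).toReal * ‖Gu u (x, t)‖) ≤ ν * K * (β x).toReal := by
          have : (β x).toReal * ‖Gu u (x, t)‖ ≤ (β x).toReal * K := by gcongr
          nlinarith
        have e3 := ENNReal.ofReal_le_ofReal (e.trans e2)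
        rw [ENNReal.ofReal_mul (by positivity), ENNReal.ofReal_toReal hβt] at e3
        exact e3

/-- **Small-drift propagation of lower bounds** (Lemma 3.1). -/
theorem small_drift_propagation_of_lower_bounds
    (n : ℕ) (hn : 0 < n) (ν : ℝ) (hν : 1 ≤ ν) :
    ∃ s₁ C₁ : ℝ, 0 < s₁ ∧ 0 < C₁ ∧
      ∀ α : ℝ, 0 < α →
        ∃ k : ℝ, 0 < k ∧
          ∀ (r ℓ : ℝ) (u : En n × ℝ → ℝ)
            (a : En n × ℝ → Matrix (Fin n) (Fin n) ℝ) (b : En n × ℝ → En n)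
            (O : Set (En n × ℝ)),
            0 < r → 0 < ℓ →
            IsOpen O →
            closure (box (0 : En n) r (-(r ^ 2)) ((α - 1) * r ^ 2)) ⊆ O →
            IsC21 u O →
            UnifParabolic ν a (box (0 : En n) r (-(r ^ 2)) ((α - 1) * r ^ 2)) →
            LxnLtinfPow b (box (0 : En n) r (-(r ^ 2)) ((α - 1) * r ^ 2)) ≤
              ENNReal.ofReal s₁ →
            (∀ X ∈ box (0 : En n) r (-(r ^ 2)) ((α - 1) * r ^ 2),
              -Dt u X + Lop a b u X ≤ 0) →
            (∀ X ∈ box (0 : En n) r (-(r ^ 2)) ((α - 1) * r ^ 2), 0 < u X) →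
            (∀ x ∈ ball (0 : En n) (r / 2), ℓ ≤ u (x, -(r ^ 2))) →
            ∀ x ∈ ball (0 : En n) (r / 2),
              C₁ * (2 : ℝ) ^ (-k) * ℓ ≤ u (x, (α - 1) * r ^ 2) := by
  have hν0 : 0 < ν := by linarith
  set Λ : ℝ := ν * (2 + n * ν) with hΛ
  have hΛ0 : 0 < Λ := by positivity
  have hd : 0 < 1 - Real.exp (-(Λ / 2)) := by
    rw [sub_pos, Real.exp_lt_one_iff]; linarith
  set q : ℝ := Λ * (4 + 2 * n * ν) / (1 - Real.exp (-(Λ / 2))) with hq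
  have hq0 : 0 < q := by positivity
  have hq1 : q * (1 - Real.exp (-(Λ / 2))) = Λ * (4 + 2 * n * ν) := by
    rw [hq]; field_simp
  set c0 : ℝ := Real.exp (-q) * (1 - Real.exp (-Λ)) with hc0
  have hd2 : 0 < 1 - Real.exp (-Λ) := by
    rw [sub_pos, Real.exp_lt_one_iff]; linarith
  have hc0pos : 0 < c0 := by positivity
  have hc0lt : c0 ≤ 1 := by
    have h1 : Real.exp (-q) ≤ 1 := Real.exp_le_one_iff.2 (by linarith)
    have h2 : 1 - Real.exp (-Λ) ≤ 1 := by linarith [Real.exp_pos (-Λ)]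
    exact mul_le_one₀ h1 hd2.le h2
  set C : ℝ := 6 * Λ * Real.exp (4 * Λ) + c0 / 24 with hC
  have hC0 : 0 < C := by positivity
  have hω0 : 0 < (volume (ball (0 : En n) 1)).toReal :=
    ENNReal.toReal_pos (measure_ball_pos _ _ one_pos).ne' measure_ball_lt_top.ne
  refine ⟨1 / 2 * (volume (ball (0 : En n) 1)).toReal * (c0 / (96 * ν * C)) ^ n, 1,
    by positivity, one_pos, fun α hα => ?_⟩
  obtain ⟨m, hm⟩ := exists_nat_ge (36 * α)
  have hm0 : (0 : ℝ) < m := by linarith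
  have hlog2 : 0 < Real.log 2 := Real.log_pos (by norm_num)
  have hlogc : Real.log (c0 / 2) < 0 := Real.log_neg (by positivity) (by linarith)
  refine ⟨m * (-Real.log (c0 / 2)) / Real.log 2, ?_, ?_⟩
  · have : 0 < -Real.log (c0 / 2) := by linarith
    positivity
  intro r ℓ u a b O hr hℓ hO hQO hu ha hb heq hpos hlow
  have hk : (2 : ℝ) ^ (-(m * (-Real.log (c0 / 2)) / Real.log 2)) = (c0 / 2) ^ m := by
    rw [Real.rpow_def_of_pos two_pos, ← Real.exp_log (pow_pos (half_pos hc0pos) m), Real.log_pow]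
    congr 1
    field_simp
  rw [hk, one_mul]
  set ρ : ℝ := r * Real.sqrt (α / m) with hρdef
  have hρ : 0 < ρ := by positivity
  have hρ2 : ρ ^ 2 = α * r ^ 2 / m := by
    rw [hρdef, mul_pow, Real.sq_sqrt (by positivity)]; ring
  have hρr : ρ ≤ r / 6 := by
    have h1 : Real.sqrt (α / m) ≤ 1 / 6 := by
      refine Real.sqrt_le_iff.2 ⟨by norm_num, ?_⟩
      rw [div_le_iff₀ hm0]; linarith
    calc ρ ≤ r * (1 / 6) := by rw [hρdef]; gcongr
      _ = r / 6 := by ring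
  have hmρ : m * ρ ^ 2 = α * r ^ 2 := by rw [hρ2]; field_simp
  have hT : -(r ^ 2) < (α - 1) * r ^ 2 := by
    have : 0 < α * r ^ 2 := by positivity
    linarith
  have key : ∀ j : ℕ, j ≤ m → ∀ x ∈ ball (0 : En n) (r / 2),
      (c0 / 2) ^ j * ℓ ≤ u (x, -(r ^ 2) + j * ρ ^ 2) := by
    intro j
    induction j with
    | zero => intro _ x hx; simpa using hlow x hx
    | succ j ih =>
      intro hj x hx
      have ihj := ih (by omega)
      have hxn : ‖x‖ < r / 2 := by simpa using hx
      have hs0 : 0 ≤ 1 - 2 * ρ / r := by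
        rw [sub_nonneg, div_le_one hr]; linarith
      have hyn : ‖(1 - 2 * ρ / r) • x‖ ≤ r / 2 - ρ := by
        rw [norm_smul, Real.norm_eq_abs, abs_of_nonneg hs0]
        calc (1 - 2 * ρ / r) * ‖x‖ ≤ (1 - 2 * ρ / r) * (r / 2) := by gcongr
          _ = r / 2 - ρ := by field_simp
      have hjm : (j : ℝ) + 1 ≤ m := by exact_mod_cast hj
      have h1 := one_step hn hν (ℓ := (c0 / 2) ^ j * ℓ) hΛ hq1 hq0 hc0 hC rfl hr (by positivity)
        hT hO hQO hu ha hb heq hpos (y := (1 - 2 * ρ / r) • x) (ρ := ρ)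
        (t0 := -(r ^ 2) + j * ρ ^ 2) hρ (by linarith)
        (by have : 0 ≤ (j : ℝ) * ρ ^ 2 := by positivity
            linarith)
        (by have : ((j : ℝ) + 1) * ρ ^ 2 ≤ m * ρ ^ 2 := by gcongr
            linarith)
        (fun z hz => by
          refine ihj z (ball_subset_ball' ?_ hz)
          rw [dist_zero_right]; linarith) x (by
          have e : x - (1 - 2 * ρ / r) • x = (2 * ρ / r) • x := by
            rw [sub_smul, one_smul]; abel
          rw [mem_closedBall, dist_eq_norm, e, norm_smul, Real.norm_eq_abs,
            abs_of_nonneg (by positivity)]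
          calc 2 * ρ / r * ‖x‖ ≤ 2 * ρ / r * (r / 2) := by gcongr
            _ = ρ := by field_simp
            _ ≤ 2 * ρ := by linarith)
      have e1 : -(r ^ 2) + ((j + 1 : ℕ) : ℝ) * ρ ^ 2 = -(r ^ 2) + j * ρ ^ 2 + ρ ^ 2 := by
        push_cast; ring
      rw [e1, pow_succ]
      calc (c0 / 2) ^ j * (c0 / 2) * ℓ = c0 / 2 * ((c0 / 2) ^ j * ℓ) := by ring
        _ ≤ _ := h1
  intro x hx
  have h := key m le_rfl x hx
  have e : -(r ^ 2) + (m : ℝ) * ρ ^ 2 = (α - 1) * r ^ 2 := by rw [hmρ]; ring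
  rwa [e] at h
end
end
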